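/- arXiv:2301.03917 — 7 statements merged into one kernel-verified Lean document; each statement's English description precedes it below -/
import Mathlib

section
/- Let G be a finite 2-group of order 2^n and let χ be a non-linear irreducible complex character of G. Then the number of elements g ∈ G with χ(g) = 0 is at least 2^(n-1) + 2. -/
open CategoryTheory

theorem aux_eig {V : Type} [AddCommGroup V] [Module ℂ V] [FiniteDimensional ℂ V]
    (f : Module.End ℂ V) (M : ℕ) (hM : 0 < M) (hf : f ^ M = 1) :
    ∃ l : Fin (Module.finrank ℂ V) → ℂ, (∀ i, l i ^ M = 1) ∧
      ∀ k : ℕ, LinearMap.trace ℂ V (f ^ k) = ∑ i, l i ^ k := by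
  classical
  have hss : f.IsSemisimple := by
    apply Module.End.isSemisimple_of_squarefree_aeval_eq_zero
      (p := (Polynomial.X ^ M - Polynomial.C (1 : ℂ)))
    · apply Polynomial.Separable.squarefree
      apply Polynomial.separable_X_pow_sub_C
      · exact_mod_cast hM.ne'
      · exact one_ne_zero
    · simp [hf]
  have htop : ⨆ μ, f.eigenspace μ = ⊤ := by
    rw [← Module.End.iSup_maxGenEigenspace_eq_top f]
    congr 1
    ext μ : 1
    rw [hss.isFinitelySemisimple.maxGenEigenspace_eq_eigenspace]
  have hint : DirectSum.IsInternal (fun μ => f.eigenspace μ) :=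
    DirectSum.isInternal_submodule_of_iSupIndep_of_iSup_eq_top
      f.eigenspaces_iSupIndep htop
  let b0 := hint.collectedBasis (fun μ => Module.finBasis ℂ (f.eigenspace μ))
  have hb0 : ∀ x, f (b0 x) = x.1 • b0 x := by
    intro x
    exact Module.End.mem_eigenspace_iff.1 (hint.collectedBasis_mem _ x)
  have : Finite _ := Module.Finite.finite_basis b0
  let _ := Fintype.ofFinite (Σ μ, Fin (Module.finrank ℂ (f.eigenspace μ)))
  let e := Fintype.equivFinOfCardEq (Module.finrank_eq_card_basis b0).symm
  let b := b0.reindex e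
  have hb : ∀ i, f (b i) = (e.symm i).1 • b i := by
    intro i
    simp only [b, Module.Basis.reindex_apply, hb0]
  have hbk : ∀ k i, (f ^ k) (b i) = (e.symm i).1 ^ k • b i := by
    intro k i
    induction k with
    | zero => simp
    | succ k ih => rw [pow_succ', Module.End.mul_apply, ih, map_smul, hb, smul_smul, pow_succ]
  refine ⟨fun i => (e.symm i).1, ?_, ?_⟩
  · intro i
    have h := hbk M i
    rw [hf, Module.End.one_apply] at h
    have h2 := congrArg (fun v => b.repr v i) h
    simpa using h2.symm
  · intro k
    rw [LinearMap.trace_eq_matrix_trace ℂ b, Matrix.trace]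
    refine Finset.sum_congr rfl fun i _ => ?_
    simp [LinearMap.toMatrix_apply, hbk]

theorem aux_conj {V : Type} [AddCommGroup V] [Module ℂ V] [FiniteDimensional ℂ V]
    (f h : Module.End ℂ V) (M : ℕ) (hM : 0 < M) (hf : f ^ M = 1) (hh : f * h = 1) :
    LinearMap.trace ℂ V h = (starRingEnd ℂ) (LinearMap.trace ℂ V f) := by
  obtain ⟨l, hl, ht⟩ := aux_eig f M hM hf
  obtain ⟨m, rfl⟩ : ∃ m, M = m + 1 := ⟨M - 1, by omega⟩
  have : h = f ^ m := by
    calc h = f ^ (m+1) * h := by rw [hf, one_mul]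
      _ = f ^ m := by rw [pow_succ, mul_assoc, hh, mul_one]
  have h1 := ht 1
  rw [pow_one] at h1
  rw [this, ht, h1, map_sum]
  refine Finset.sum_congr rfl fun i _ => ?_
  have hn : ‖l i‖ = 1 := Complex.norm_eq_one_of_pow_eq_one (hl i) (by omega)
  rw [pow_one, ← Complex.inv_eq_conj hn]
  have h0 : l i ≠ 0 := by
    intro h; simp [h] at hn
  field_simp
  rw [← pow_succ]; exact hl i

theorem aux_geom (w : ℂ) (K : ℕ) (hw : w ^ (2 * K) = 1) :
    ∑ k ∈ Finset.range K, w ^ (2 * k + 1) =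
      (K : ℂ) * (((if w = 1 then 1 else 0) - (if w = -1 then 1 else 0) : ℤ) : ℂ) := by
  by_cases h1 : w = 1
  · subst h1
    have : ¬ ((1:ℂ) = -1) := by norm_num
    simp [this]
  by_cases h2 : w = -1
  · subst h2
    simp [h1, pow_succ, pow_mul]
  have h3 : w ^ 2 ≠ 1 := by
    intro h; rcases (by simpa using h : w = 1 ∨ w = -1) with h | h <;> contradiction
  have : ∑ k ∈ Finset.range K, w ^ (2 * k + 1) = (∑ k ∈ Finset.range K, (w^2) ^ k) * w := by
    rw [Finset.sum_mul]
    refine Finset.sum_congr rfl fun i _ => ?_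
    rw [pow_succ, pow_mul]
  rw [this, geom_sum_eq h3, ← pow_mul, hw]
  simp [h1, h2]

theorem aux_par {ι : Type} (s : Finset ι) (c : ι → ι → ℤ) (hc : ∀ i j, c i j = c j i) :
    (∑ i ∈ s, ∑ j ∈ s, c i j) % 2 = (∑ i ∈ s, c i i) % 2 := by
  classical
  induction s using Finset.induction_on with
  | empty => simp
  | insert a s ha ih =>
    rw [Finset.sum_insert ha, Finset.sum_insert ha, Finset.sum_insert ha]
    have : ∑ i ∈ s, ∑ j ∈ insert a s, c i j = ∑ i ∈ s, c a i + ∑ i ∈ s, ∑ j ∈ s, c i j := by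
      rw [← Finset.sum_add_distrib]
      refine Finset.sum_congr rfl fun i _ => ?_
      rw [Finset.sum_insert ha, hc]
    omega

theorem aux_core {V : Type} [AddCommGroup V] [Module ℂ V] [FiniteDimensional ℂ V]
    (f : Module.End ℂ V) (K : ℕ) (hK : 0 < K) (hf : f ^ (2 * K) = 1) :
    ∃ A : ℤ, A % 2 = (Module.finrank ℂ V : ℤ) % 2 ∧
      (K : ℝ) * A = ∑ k ∈ Finset.range K, ‖LinearMap.trace ℂ V (f ^ (2 * k + 1))‖ ^ 2 := by
  obtain ⟨l, hl, ht⟩ := aux_eig f (2 * K) (by omega) hf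
  have hn : ∀ i, ‖l i‖ = 1 := fun i => Complex.norm_eq_one_of_pow_eq_one (hl i) (by omega)
  have h0 : ∀ i, l i ≠ 0 := by
    intro i h; have := hn i; simp [h] at this
  let c : Fin (Module.finrank ℂ V) → Fin (Module.finrank ℂ V) → ℤ := fun i j =>
    (if l i * (l j)⁻¹ = 1 then 1 else 0) - (if l i * (l j)⁻¹ = -1 then 1 else 0)
  refine ⟨∑ i, ∑ j, c i j, ?_, ?_⟩
  · rw [aux_par]
    · have : ∀ i, c i i = 1 := by
        intro i
        have : ¬ ((1:ℂ) = -1) := by norm_num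
        simp [c, mul_inv_cancel₀ (h0 i), this]
      simp [this]
    · intro i j
      have e1 : l i * (l j)⁻¹ = 1 ↔ l j * (l i)⁻¹ = 1 := by
        have := h0 i; have := h0 j
        field_simp; exact eq_comm
      have e2 : l i * (l j)⁻¹ = -1 ↔ l j * (l i)⁻¹ = -1 := by
        have := h0 i; have := h0 j
        field_simp; constructor <;> intro h <;> simp [h]
      simp only [c, e1, e2]
  · apply Complex.ofReal_injective
    push_cast
    simp_rw [← Complex.mul_conj', ht, map_sum (starRingEnd ℂ), Finset.sum_mul_sum]
    rw [Finset.mul_sum, Finset.sum_comm]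
    refine Finset.sum_congr rfl fun i _ => ?_
    rw [Finset.mul_sum, Finset.sum_comm]
    refine Finset.sum_congr rfl fun j _ => ?_
    rw [← aux_geom]
    · refine Finset.sum_congr rfl fun k _ => ?_
      rw [map_pow, ← Complex.inv_eq_conj (hn j), mul_pow]
    · rw [mul_pow, inv_pow, hl, hl]; simp

theorem aux_schur {G : Type} [Group G] [Fintype G] (V : FDRep ℂ G) (hV : Simple V)
    (z : G) (hz : z ∈ Subgroup.center G) : ∃ c : ℂ, V.ρ z = c • 1 := by
  let φ : V ⟶ V := ⟨(Action.ρ V z), by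
    intro g
    have h : g * z = z * g := Subgroup.mem_center_iff.1 hz g
    change (Action.ρ V) g ≫ (Action.ρ V) z = (Action.ρ V) z ≫ (Action.ρ V) g
    change (Action.ρ V) z * (Action.ρ V) g = (Action.ρ V) g * (Action.ρ V) z
    rw [← map_mul, ← map_mul, h]⟩
  obtain ⟨c, hc⟩ := endomorphism_simple_eq_smul_id ℂ φ
  refine ⟨c, ?_⟩
  have h2 := congrArg (fun ψ : V ⟶ V => ψ.hom.hom.hom) hc
  exact h2.symm


theorem aux_central {G : Type} [Group G] [Fintype G] (V : FDRep ℂ G) (hV : Simple V)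
    (hnl : 1 < Module.finrank ℂ V)
    (z : G) (hz : z ∈ Subgroup.center G) : ‖V.character z‖ = Module.finrank ℂ V := by
  obtain ⟨c, hc⟩ := aux_schur V hV z hz
  have h1 : ∀ k : ℕ, V.character (z ^ k) = c ^ k * Module.finrank ℂ V := by
    intro k
    change LinearMap.trace ℂ V (V.ρ (z ^ k)) = _
    rw [map_pow, hc, smul_pow, one_pow, map_smul, LinearMap.trace_one, smul_eq_mul]
  have h2 := h1 (Fintype.card G)
  have hd : (Module.finrank ℂ V : ℂ) ≠ 0 := by
    exact_mod_cast (by omega : Module.finrank ℂ V ≠ 0)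
  rw [pow_card_eq_one, FDRep.char_one] at h2
  have h3 : c ^ Fintype.card G = 1 := by
    have : c ^ Fintype.card G * (Module.finrank ℂ V : ℂ) = 1 * Module.finrank ℂ V := by
      rw [← h2, one_mul]
    exact mul_right_cancel₀ hd this
  have h4 := h1 1
  rw [pow_one, pow_one] at h4
  rw [h4, norm_mul, Complex.norm_eq_one_of_pow_eq_one h3 Fintype.card_ne_zero]
  simp

theorem aux_orth {G : Type} [Group G] [Fintype G] (V : FDRep ℂ G) (hV : Simple V) :
    ∑ g : G, ‖V.character g‖ ^ 2 = Fintype.card G := by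
  have h := FDRep.char_orthonormal V V
  rw [if_pos ⟨Iso.refl V⟩, Nat.card_eq_fintype_card] at h
  have hG : (Fintype.card G : ℂ) ≠ 0 := by exact_mod_cast Fintype.card_ne_zero
  have h2 : ∑ g : G, V.character g * V.character g⁻¹ = Fintype.card G := by
    field_simp at h
    simpa using h
  apply Complex.ofReal_injective
  push_cast
  rw [← h2]
  refine Finset.sum_congr rfl fun g _ => ?_
  rw [← Complex.mul_conj']
  congr 1
  symm
  apply aux_conj (V.ρ g) (V.ρ g⁻¹) (Fintype.card G) Fintype.card_pos
  · rw [← map_pow, pow_card_eq_one, map_one]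
  · rw [← map_mul, mul_inv_cancel, map_one]

theorem stmt0 {G : Type} [Group G] [Fintype G] {n : ℕ}
    (hG : Fintype.card G = 2 ^ n)
    (V : FDRep ℂ G) (hV : Simple V)
    (hnl : 1 < Module.finrank ℂ V) :
    2 ^ (n - 1) + 2 ≤ {g : G | V.character g = 0}.ncard := by
  classical
  have hK : 0 < 2 ^ n := by positivity
  have hKR : (0 : ℝ) < ((2 ^ n : ℕ) : ℝ) := by exact_mod_cast hK
  have key : ∀ g : G, ∃ A : ℤ, A % 2 = (Module.finrank ℂ V : ℤ) % 2 ∧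
      ((2 ^ n : ℕ) : ℝ) * A = ∑ k ∈ Finset.range (2 ^ n), ‖V.character (g ^ (2 * k + 1))‖ ^ 2 := by
    intro g
    obtain ⟨A, h1, h2⟩ := aux_core (V.ρ g) (2 ^ n) hK (by
      rw [← map_pow, ← hG, mul_comm, pow_mul, pow_card_eq_one, one_pow, map_one])
    refine ⟨A, h1, h2.trans ?_⟩
    refine Finset.sum_congr rfl fun k _ => ?_
    rw [← map_pow]
    rfl
  choose A hA1 hA2 using key
  have hnn : ∀ g, 0 ≤ A g := by
    intro g
    have : 0 ≤ ((2 ^ n : ℕ) : ℝ) * A g := by rw [hA2]; positivity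
    exact_mod_cast (mul_nonneg_iff_of_pos_left hKR).1 this
  have hpos : ∀ g, V.character g ≠ 0 → 0 < A g := by
    intro g hg
    have : 0 < ((2 ^ n : ℕ) : ℝ) * A g := by
      rw [hA2]
      refine Finset.sum_pos' (fun _ _ => by positivity) ⟨0, by simp, ?_⟩
      have := norm_pos_iff.2 hg
      simp only [mul_zero, zero_add, pow_one]
      positivity
    exact_mod_cast (mul_pos_iff_of_pos_left hKR).1 this
  have hcen : ∀ z ∈ Subgroup.center G, A z = (Module.finrank ℂ V : ℤ) ^ 2 := by
    intro z hz
    have h := hA2 z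
    rw [Finset.sum_congr rfl (fun k _ => by
      rw [aux_central V hV hnl _ (Subgroup.pow_mem _ hz (2 * k + 1))])] at h
    rw [Finset.sum_const, Finset.card_range, nsmul_eq_mul] at h
    exact_mod_cast mul_left_cancel₀ hKR.ne' h
  have hsum : ∑ g, A g = 2 ^ n := by
    have h : ((2 ^ n : ℕ) : ℝ) * ((∑ g, A g : ℤ) : ℝ) = ((2 ^ n : ℕ) : ℝ) * ((2 ^ n : ℤ) : ℝ) := by
      push_cast
      rw [Finset.mul_sum]
      have hA3 := hA2
      push_cast at hA3
      simp_rw [hA3]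
      rw [Finset.sum_comm]
      have : ∀ k ∈ Finset.range (2 ^ n), ∑ g : G, ‖V.character (g ^ (2 * k + 1))‖ ^ 2
          = (2 : ℝ) ^ n := by
        intro k _
        have hco : (Nat.card G).Coprime (2 * k + 1) := by
          rw [Nat.card_eq_fintype_card, hG]
          apply Nat.Coprime.pow_left
          simp
        have := Equiv.sum_comp (powCoprime hco) (fun g => ‖V.character g‖ ^ 2)
        rw [aux_orth V hV, hG] at this
        simpa using this
      rw [Finset.sum_congr rfl this]
      simp
    exact_mod_cast mul_left_cancel₀ hKR.ne' h
  have hd : 4 ≤ (Module.finrank ℂ V : ℤ) ^ 2 := by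
    have : (2 : ℤ) ≤ Module.finrank ℂ V := by exact_mod_cast hnl
    nlinarith
  have hone : A 1 = (Module.finrank ℂ V : ℤ) ^ 2 := hcen 1 (Subgroup.one_mem _)
  -- even degree
  have heven : (Module.finrank ℂ V : ℤ) % 2 = 0 := by
    by_contra hodd
    have hge : ∀ g, 1 ≤ A g := by
      intro g
      have := hnn g
      have := hA1 g
      omega
    have hlt : ∑ g : G, (1 : ℤ) < ∑ g, A g :=
      Finset.sum_lt_sum (fun g _ => hge g) ⟨1, Finset.mem_univ _, by omega⟩
    rw [hsum] at hlt
    simp [hG] at hlt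
  have hn : n ≠ 0 := by
    rintro rfl
    have := Finset.single_le_sum (f := A) (fun g _ => hnn g) (Finset.mem_univ 1)
    rw [hsum] at this
    omega
  have hnt : Nontrivial G := by
    rw [← Fintype.one_lt_card_iff_nontrivial, hG]
    exact Nat.one_lt_two_pow hn
  have hp : IsPGroup 2 G := IsPGroup.of_card (n := n) (by rw [Nat.card_eq_fintype_card, hG])
  have : Fact (Nat.Prime 2) := ⟨Nat.prime_two⟩
  have hcn := hp.center_nontrivial
  obtain ⟨⟨z, hz⟩, hz1⟩ := exists_ne (1 : Subgroup.center G)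
  have hz1' : z ≠ 1 := fun h => hz1 (Subtype.ext h)
  have hle : ∀ g, (2 * (if V.character g = 0 then 0 else 1) + (if g = 1 then 2 else 0)
      + (if g = z then 2 else 0) : ℤ) ≤ A g := by
    intro g
    by_cases h1 : g = 1
    · subst h1
      rw [if_neg hz1'.symm, hone]
      split_ifs <;> omega
    by_cases h2 : g = z
    · subst h2
      rw [if_neg h1, hcen g hz]
      split_ifs <;> omega
    rw [if_neg h1, if_neg h2]
    have := hnn g
    have := hA1 g
    split_ifs with h3
    · omega
    · have := hpos g h3
      omega
  have hfin := Finset.sum_le_sum (s := Finset.univ) (fun g _ => hle g)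
  rw [hsum, Finset.sum_add_distrib, Finset.sum_add_distrib, ← Finset.mul_sum] at hfin
  have hc : (∑ g : G, (if V.character g = 0 then (0:ℤ) else 1))
      + ({g : G | V.character g = 0}.ncard : ℤ) = 2 ^ n := by
    have e1 : ({g : G | V.character g = 0}.ncard : ℤ)
        = ∑ g : G, (if V.character g = 0 then (1:ℤ) else 0) := by
      rw [Set.ncard_eq_toFinset_card']
      simp
    rw [e1, ← Finset.sum_add_distrib]
    rw [Finset.sum_congr rfl (g := fun _ => (1 : ℤ)) (fun g _ => by split_ifs <;> rfl)]
    simp [hG]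
  simp only [Finset.sum_ite_eq', Finset.mem_univ, if_true] at hfin
  obtain ⟨m, rfl⟩ := Nat.exists_eq_succ_of_ne_zero hn
  simp only [Nat.succ_eq_add_one, Nat.add_sub_cancel, pow_succ] at hfin hc ⊢
  zify
  omega
end

section
/- Let p be a prime and let G be a finite p-group of order p^n. If χ is a non-linear irreducible complex character of G, then χ(g) = 0 for at least p^n − p^(n−1) + p^2 − p elements g ∈ G. -/
open CategoryTheory

/-- elements whose image commutes with everything in the image -/
def cenSub {G U : Type*} [Group G] [Group U] (φ : G →* U) : Subgroup G where
  carrier := {g | ∀ h, Commute (φ g) (φ h)}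
  mul_mem' := by
    intro a b ha hb h
    rw [map_mul]
    exact (ha h).mul_left (hb h)
  one_mem' := by
    intro h
    rw [map_one]
    exact Commute.one_left _
  inv_mem' := by
    intro a ha h
    rw [map_inv]
    exact (ha h).inv_left

theorem mem_cenSub {G U : Type*} [Group G] [Group U] (φ : G →* U) (g : G) :
    g ∈ cenSub φ ↔ ∀ h, Commute (φ g) (φ h) := Iff.rfl

theorem cenSub_normal {G U : Type*} [Group G] [Group U] (φ : G →* U) : (cenSub φ).Normal := by
  constructor
  intro n hn g h
  have : φ (g * n * g⁻¹) = φ n := by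
    rw [map_mul, map_mul, ← (hn g).eq, map_inv]
    simp
  rw [this]
  exact hn h

theorem count_aux {G U : Type*} [Group G] [Finite G] [Group U] {p n : ℕ} (hp : p.Prime)
    (hG : Nat.card G = p ^ n) (φ : G →* U) (hne : cenSub φ ≠ ⊤) (T : Set G)
    (hT : ∀ a b : G, a * b * a⁻¹ * b⁻¹ ∈ cenSub φ → ¬ Commute (φ a) (φ b) → b ∈ T) :
    p ^ n - p ^ (n - 1) + p ^ 2 - p ≤ T.ncard := by
  have := Fact.mk hp
  have hPG : IsPGroup p G := IsPGroup.of_card hG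
  set Z := cenSub φ with hZ
  have hZn : Z.Normal := cenSub_normal φ
  have : Nontrivial (G ⧸ Z) := QuotientGroup.nontrivial_iff.mpr hne
  have hc := (hPG.to_quotient Z).center_nontrivial
  let W : Subgroup G := (Subgroup.center (G ⧸ Z)).comap (QuotientGroup.mk' Z)
  have hW : ∀ w ∈ W, ∀ g, w * g * w⁻¹ * g⁻¹ ∈ Z := by
    intro w hw g
    have h1 := Subgroup.mem_center_iff.mp (Subgroup.mem_comap.mp hw) (QuotientGroup.mk' Z g)
    rw [← QuotientGroup.eq_one_iff]
    simp only [QuotientGroup.mk'_apply] at h1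
    simp only [QuotientGroup.mk_mul, QuotientGroup.mk_inv]
    rw [← h1]
    group
  have hZW : Z ≤ W := by
    intro z hz
    have : QuotientGroup.mk' Z z = 1 := (QuotientGroup.eq_one_iff z).mpr hz
    rw [Subgroup.mem_comap, this]
    exact one_mem _
  obtain ⟨x, hxW, hxZ⟩ : ∃ x ∈ W, x ∉ Z := by
    obtain ⟨⟨q, hq⟩, hq1⟩ := exists_ne (1 : Subgroup.center (G ⧸ Z))
    obtain ⟨x, rfl⟩ := QuotientGroup.mk'_surjective Z q
    refine ⟨x, hq, fun hx => hq1 ?_⟩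
    ext
    exact (QuotientGroup.eq_one_iff x).mpr hx
  let C : Subgroup G := (Subgroup.centralizer {φ x}).comap φ
  have hC : ∀ g, g ∈ C ↔ Commute (φ x) (φ g) := by
    intro g
    rw [Subgroup.mem_comap, Subgroup.mem_centralizer_singleton_iff]
    exact ⟨fun h => h.symm, fun h => h.symm⟩
  have hZC : Z ≤ C := fun z hz => (hC z).2 (hz x).symm
  obtain ⟨g, hg⟩ : ∃ g, ¬ Commute (φ x) (φ g) := by
    by_contra! h
    exact hxZ h
  have hgC : g ∉ C := fun h => hg ((hC g).1 h)
  let S : Subgroup G := C ⊓ W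
  have hZS : Z < S := by
    refine lt_of_le_of_ne (le_inf hZC hZW) fun h => hxZ ?_
    rw [h]
    exact ⟨(hC x).2 (Commute.refl _), hxW⟩
  have hCt : C < ⊤ := lt_top_iff_ne_top.mpr fun h => hgC (h ▸ Subgroup.mem_top g)
  have hZb : (⊥ : Subgroup G) < Z := by
    refine bot_lt_iff_ne_bot.mpr fun h => hg ?_
    have h1 := hW x hxW g
    rw [h, Subgroup.mem_bot] at h1
    have h2 : x * g = g * x := by
      rw [← mul_inv_eq_one]; rw [← h1]; group
    exact (Commute.map (show Commute x g from h2) φ)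
  have hlt : ∀ A B : Subgroup G, A < B → Nat.card A < Nat.card B := fun A B h =>
    Set.ncard_lt_ncard (show (A : Set G) ⊂ B from h)
  obtain ⟨z, hz⟩ := (hPG.to_subgroup Z).exists_card_eq
  obtain ⟨s, hs⟩ := (hPG.to_subgroup S).exists_card_eq
  obtain ⟨c, hcc⟩ := (hPG.to_subgroup C).exists_card_eq
  have h1 := hlt _ _ hZb
  have h2 := hlt _ _ hZS
  have h3 := hlt _ _ hCt
  rw [hz, Subgroup.card_bot] at h1
  rw [hz, hs] at h2
  rw [Subgroup.card_top, hG, hcc] at h3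
  have hz1 : 1 ≤ z := by
    rcases Nat.eq_zero_or_pos z with h | h
    · simp [h] at h1
    · exact h
  have hzs : z + 1 ≤ s := (Nat.pow_lt_pow_iff_right hp.one_lt).1 h2
  have hcn : c + 1 ≤ n := (Nat.pow_lt_pow_iff_right hp.one_lt).1 h3
  have hsub : ((C : Set G)ᶜ ∪ ((S : Set G) \ (Z : Set G))) ⊆ T := by
    rintro b (hb | ⟨hb, hbZ⟩)
    · exact hT x b (hW x hxW b) fun h => hb ((hC b).2 h)
    · obtain ⟨h, hh⟩ : ∃ h, ¬ Commute (φ b) (φ h) := by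
        by_contra! h
        exact hbZ h
      refine hT h b ?_ fun h' => hh h'.symm
      have := Z.inv_mem (hW b hb.2 h)
      convert this using 1
      group
  have hcard := Set.ncard_le_ncard hsub (Set.toFinite T)
  rw [Set.ncard_union_eq ?_ (Set.toFinite _) (Set.toFinite _),
    Set.ncard_sdiff (show (Z : Set G) ⊆ S from hZS.le) (Set.toFinite _), Set.ncard_compl] at hcard
  · have e1 : (C : Set G).ncard = p ^ c := hcc
    have e2 : (S : Set G).ncard = p ^ s := hs
    have e3 : (Z : Set G).ncard = p ^ z := hz
    rw [e1, e2, e3, hG] at hcard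
    have b1 : p ^ c ≤ p ^ (n - 1) := Nat.pow_le_pow_right hp.pos (by omega)
    have b2 : p ^ (z + 1) ≤ p ^ s := Nat.pow_le_pow_right hp.pos hzs
    have b3 : p ^ (n - 1) ≤ p ^ n := Nat.pow_le_pow_right hp.pos (by omega)
    have b4 : p ^ 2 + p ^ z ≤ p ^ (z + 1) + p := by
      obtain ⟨k, rfl⟩ := Nat.exists_eq_add_of_le hz1
      have : 1 ≤ p ^ k := Nat.one_le_pow _ _ hp.pos
      obtain ⟨m, hm⟩ := Nat.exists_eq_add_of_le this
      obtain ⟨q, rfl⟩ := Nat.exists_eq_add_of_le hp.one_le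
      rw [pow_succ (1 + q) (1 + k), pow_add (1 + q) 1 k, hm]
      nlinarith [Nat.zero_le (m * q), Nat.zero_le (m * q * q)]
    omega
  · rw [Set.disjoint_left]
    rintro a ha ⟨hb, -⟩
    exact ha hb.1

theorem schur_aux {G : Type} [Group G] (V : FDRep ℂ G) (hV : Simple V)
    (f : V →ₗ[ℂ] V) (hf : ∀ g, Commute f (V.ρ g)) : ∃ c : ℂ, f = c • (1 : V →ₗ[ℂ] V) := by
  let F : V ⟶ V :=
    { hom := FGModuleCat.ofHom f
      comm := by
        intro g
        ext v
        exact LinearMap.congr_fun (hf g).eq v }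
  obtain ⟨c, hc⟩ := endomorphism_simple_eq_smul_id ℂ F
  refine ⟨c, ?_⟩
  have : (c • 𝟙 V : V ⟶ V).hom.hom.hom = F.hom.hom.hom := by rw [hc]
  exact this.symm

/-- If `G` is a finite `p`-group of order `p^n` and `χ` is a non-linear
irreducible complex character of `G`, then `χ(g) = 0` for at least
`p^n - p^(n-1) + p^2 - p` elements `g ∈ G`. -/
theorem stmt2 {G : Type} [Group G] [Fintype G] {p n : ℕ} (hp : p.Prime)
    (hG : Fintype.card G = p ^ n)
    (V : FDRep ℂ G) (hV : Simple V)
    (hnl : 1 < Module.finrank ℂ V) :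
    p ^ n - p ^ (n - 1) + p ^ 2 - p ≤ {g : G | V.character g = 0}.ncard := by
  let φ : G →* (V →ₗ[ℂ] V)ˣ := V.ρ.toHomUnits
  have hφ : ∀ a b, Commute (φ a) (φ b) ↔ Commute (V.ρ a) (V.ρ b) := fun a b =>
    ⟨fun h => congrArg Units.val h.eq, fun h => Units.ext h.eq⟩
  have hsc : ∀ g ∈ cenSub φ, ∃ c : ℂ, V.ρ g = c • (1 : V →ₗ[ℂ] V) := fun g hg =>
    schur_aux V hV _ fun h => (hφ g h).1 (hg h)
  refine count_aux hp (by rw [Nat.card_eq_fintype_card, hG]) φ ?_ _ ?_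
  · intro htop
    have hall : ∀ f : V →ₗ[ℂ] V, ∃ c : ℂ, c • (1 : V →ₗ[ℂ] V) = f := by
      intro f
      obtain ⟨c, hc⟩ := schur_aux V hV f (by
        intro g
        obtain ⟨c, hc⟩ := hsc g (htop ▸ Subgroup.mem_top g)
        rw [hc]
        exact (Commute.one_right f).smul_right c)
      exact ⟨c, hc.symm⟩
    have h1 := finrank_le_one (1 : V →ₗ[ℂ] V) hall
    rw [Module.finrank_linearMap] at h1
    nlinarith
  · intro a b hab hnc
    obtain ⟨c, hc⟩ := hsc _ hab
    have h1 : V.ρ (a * b * a⁻¹) = c • V.ρ b := by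
      have : a * b * a⁻¹ = (a * b * a⁻¹ * b⁻¹) * b := by group
      rw [this, map_mul, hc, smul_mul_assoc, one_mul]
    have h2 : V.character b = c * V.character b := by
      conv_lhs => rw [← FDRep.char_conj V b a]
      simp only [FDRep.character, h1, map_smul, smul_eq_mul]
    have hc1 : c ≠ 1 := by
      rintro rfl
      apply hnc
      rw [hφ]
      rw [one_smul] at h1
      have : V.ρ (a * b) = V.ρ (b * a) := by
        rw [map_mul V.ρ b a, ← h1, ← map_mul]
        congr 1
        group
      rwa [map_mul, map_mul] at this
    have h3 : (c - 1) * V.character b = 0 := by linear_combination -h2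
    exact (mul_eq_zero.1 h3).resolve_left (sub_ne_zero.2 hc1)
end

section
/- Let p be a prime and let G be a finite p-group of order p^n. If some non-linear irreducible complex character χ of G vanishes at exactly p^n − p^(n−1) + p^2 − p elements of G, then G has maximal class (i.e., its nilpotency class equals n − 1) and G has an abelian subgroup of index p. -/
open CategoryTheory

/-- The nilpotency class of a group: the least `m` with `upperCentralSeries G m = ⊤`.
(For nilpotent groups this agrees with `Group.nilpotencyClass`.) -/
noncomputable def nilClass (G : Type*) [Group G] : ℕ :=
  sInf {m : ℕ | upperCentralSeries G m = ⊤}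

open scoped commutatorElement

lemma nil_step {G : Type} [Group G] [Group.IsNilpotent G] (C A : Subgroup G) (hC : C.Normal)
    (h : ¬ C ≤ A) : ∃ y ∈ C, y ∉ A ∧ ∀ g : G, ⁅y, g⁆ ∈ A := by
  classical
  obtain ⟨m, hm⟩ := Group.IsNilpotent.nilpotent G
  have hex : ∃ m, ¬ (Subgroup.upperCentralSeries G m ⊓ C ≤ A) := ⟨m, by rw [hm, top_inf_eq]; exact h⟩
  have h1 := Nat.find_spec hex
  have h2 : ∀ k < Nat.find hex, ¬ ¬ (Subgroup.upperCentralSeries G k ⊓ C ≤ A) := fun k hk => Nat.find_min hex hk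
  rcases hk : Nat.find hex with _ | k
  · exfalso
    rw [hk] at h1
    apply h1
    rw [Subgroup.upperCentralSeries_zero, bot_inf_eq]
    exact bot_le
  · rw [hk] at h1 h2
    have h3 := not_not.mp (h2 k (Nat.lt_succ_self k))
    obtain ⟨y, ⟨hy1, hy2⟩, hy3⟩ := Set.not_subset.mp h1
    refine ⟨y, hy2, hy3, fun g => h3 ⟨Subgroup.mem_upperCentralSeries_succ_iff.mp hy1 g, ?_⟩⟩
    rw [commutatorElement_def, mul_assoc, mul_assoc, ← mul_assoc g]
    exact C.mul_mem hy2 (hC.conj_mem _ (C.inv_mem hy2) g)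

lemma normal_meets_center {G : Type} [Group G] [Group.IsNilpotent G] (D : Subgroup G) (hD : D.Normal)
    (h : D ≠ ⊥) : ∃ y ∈ D, y ≠ 1 ∧ y ∈ Subgroup.center G := by
  obtain ⟨y, h1, h2, h3⟩ := nil_step D ⊥ hD (fun h' => h (le_bot_iff.mp h'))
  refine ⟨y, h1, h2, Subgroup.mem_center_iff.mpr fun g => ?_⟩
  have := h3 g
  rw [Subgroup.mem_bot, commutatorElement_eq_one_iff_mul_comm] at this
  exact this.symm

lemma card_subgroup_pow {G : Type} [Group G] [Finite G] {p n : ℕ} (hp : p.Prime)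
    (hG : Nat.card G = p ^ n) (H : Subgroup G) : ∃ k ≤ n, Nat.card H = p ^ k := by
  have := H.card_subgroup_dvd_card
  rw [hG] at this
  exact (Nat.dvd_prime_pow hp).mp this

lemma dvd_of_invariant {G : Type} [Group G] [Finite G] (S : Subgroup G) (T : Set G)
    (h : ∀ t ∈ T, ∀ s ∈ S, t * s ∈ T) : Nat.card S ∣ T.ncard := by
  have hT : T = (QuotientGroup.mk : G → G ⧸ S) ⁻¹' (QuotientGroup.mk '' T) := by
    ext x
    constructor
    · exact fun hx => ⟨x, hx, rfl⟩
    · rintro ⟨t, ht, he⟩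
      have := h t ht _ (QuotientGroup.eq.mp he)
      simpa using this
  rw [← Nat.card_coe_set_eq T, hT,
    Nat.card_congr (QuotientGroup.preimageMkEquivSubgroupProdSet S (QuotientGroup.mk '' T)),
    Nat.card_prod]
  exact dvd_mul_right _ _

lemma card_eq_of_index {G : Type} [Group G] [Finite G] {H K : Subgroup G} (h : H ≤ K)
    (hc : Nat.card K ≤ Nat.card H) : H = K := Subgroup.eq_of_le_of_card_ge h hc

lemma class_le {G : Type} [Group G] [Finite G] {p n : ℕ} (hp : p.Prime)
    (hG : Nat.card G = p ^ n) (hn : 2 ≤ n) : Subgroup.upperCentralSeries G (n - 1) = ⊤ := by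
  have : Fact p.Prime := ⟨hp⟩
  have : Group.IsNilpotent G := (IsPGroup.of_card hG).isNilpotent
  have grow : ∀ i, Subgroup.upperCentralSeries G i ≠ ⊤ →
      p ^ i ≤ Nat.card (Subgroup.upperCentralSeries G i) ∧
      p * Nat.card (Subgroup.upperCentralSeries G i) ≤ Nat.card (Subgroup.upperCentralSeries G (i+1)) := by
    have step : ∀ i, Subgroup.upperCentralSeries G i ≠ ⊤ →
      p * Nat.card (Subgroup.upperCentralSeries G i) ≤ Nat.card (Subgroup.upperCentralSeries G (i+1)) := by
      intro i hi
      have hle : Subgroup.upperCentralSeries G i ≤ Subgroup.upperCentralSeries G (i+1) :=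
        Subgroup.upperCentralSeries_mono G (Nat.le_succ i)
      obtain ⟨y, -, h2, h3⟩ := nil_step ⊤ (Subgroup.upperCentralSeries G i) inferInstance
        (fun h' => hi (top_le_iff.mp h'))
      have hlt : Nat.card (Subgroup.upperCentralSeries G i) < Nat.card (Subgroup.upperCentralSeries G (i+1)) := by
        by_contra hcon
        have := Subgroup.eq_of_le_of_card_ge hle (not_lt.mp hcon)
        apply h2
        rw [this]
        exact h3
      obtain ⟨a, -, ha⟩ := card_subgroup_pow hp hG (Subgroup.upperCentralSeries G i)
      obtain ⟨b, -, hb⟩ := card_subgroup_pow hp hG (Subgroup.upperCentralSeries G (i+1))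
      rw [ha, hb] at hlt ⊢
      rw [← pow_succ']
      exact Nat.pow_le_pow_right hp.pos ((Nat.pow_lt_pow_iff_right hp.one_lt).mp hlt)
    intro i
    induction i with
    | zero => intro hi; exact ⟨by simp, step 0 hi⟩
    | succ i ih =>
      intro hi
      have h0 : Subgroup.upperCentralSeries G i ≠ ⊤ := fun h => hi (top_le_iff.mp (by
        rw [← h]; exact Subgroup.upperCentralSeries_mono G (Nat.le_succ i)))
      obtain ⟨h1, h2⟩ := ih h0
      refine ⟨?_, step _ hi⟩
      rw [pow_succ']
      exact (Nat.mul_le_mul_left p h1).trans h2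
  obtain ⟨m, rfl⟩ : ∃ m, n = m + 2 := ⟨n - 2, by omega⟩
  simp only [Nat.add_succ_sub_one]
  by_contra hcon
  have h0 : Subgroup.upperCentralSeries G m ≠ ⊤ := fun h => hcon (top_le_iff.mp (by
        rw [← h]; exact Subgroup.upperCentralSeries_mono G (Nat.le_succ m)))
  obtain ⟨a1, a2⟩ := grow m h0
  obtain ⟨b1, b2⟩ := grow (m+1) hcon
  have c2 : Nat.card (Subgroup.upperCentralSeries G (m+1+1)) ≤ p ^ (m+2) := by
    rw [← hG]; exact Subgroup.card_le_card_group _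
  have hm : Nat.card (Subgroup.upperCentralSeries G m) = p ^ m := by
    apply le_antisymm _ a1
    have : p * (p * Nat.card (Subgroup.upperCentralSeries G m)) ≤ p * (p * p ^ m) := by
      calc _ ≤ _ := Nat.mul_le_mul_left p a2
        _ ≤ _ := b2
        _ ≤ _ := c2
        _ = _ := by ring
    exact Nat.le_of_mul_le_mul_left (Nat.le_of_mul_le_mul_left this hp.pos) hp.pos
  have hq : Nat.card (G ⧸ Subgroup.upperCentralSeries G m) = p ^ 2 := by
    have := Subgroup.card_eq_card_quotient_mul_card_subgroup (Subgroup.upperCentralSeries G m)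
    rw [hG, hm] at this
    have hpos : 0 < p ^ m := pow_pos hp.pos m
    apply Nat.eq_of_mul_eq_mul_right hpos
    rw [← this]; ring
  have hcomm := (IsPGroup.isMulCommutative_of_card_eq_prime_sq hq).is_comm.comm
  apply hcon
  refine top_le_iff.mp fun x _ => Subgroup.mem_upperCentralSeries_succ_iff.mpr fun y => ?_
  rw [← QuotientGroup.eq_one_iff]
  have := hcomm (x : G ⧸ Subgroup.upperCentralSeries G m) y
  rw [commutatorElement_def]
  rw [QuotientGroup.mk_mul, QuotientGroup.mk_mul, QuotientGroup.mk_mul, QuotientGroup.mk_inv,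
    QuotientGroup.mk_inv, this]
  group

lemma core {G : Type} [Group G] [Finite G] {p n : ℕ} (hp : p.Prime)
    (hG : Nat.card G = p ^ n) (hn : 3 ≤ n) (χ : G → ℂ)
    (hconj : ∀ g h, χ (h * g * h⁻¹) = χ g) (hZ : Nat.card (Subgroup.center G) = p)
    (hP : ∀ z ∈ Subgroup.center G, z ≠ 1 → ∀ g, χ (z * g) = χ g → χ g = 0)
    (hz : {g : G | χ g = 0}.ncard = p ^ n - p ^ (n - 1) + p ^ 2 - p) :
    ∃ U : Subgroup G, U.index = p ∧ ∀ x ∈ U, ∀ y ∈ U, x * y = y * x := by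
  classical
  have : Fact p.Prime := ⟨hp⟩
  have : Group.IsNilpotent G := (IsPGroup.of_card hG).isNilpotent
  have hb : ∀ a b : G, ⁅a, b⁆ ∈ Subgroup.center G → ⁅a, b⁆ ≠ 1 → χ b = 0 := by
    intro a b h1 h2
    apply hP _ h1 h2
    rw [← hconj b a]
    congr 1
    rw [commutatorElement_def]; group
  have ha : ∀ a b : G, ⁅a, b⁆ ∈ Subgroup.center G → ⁅a, b⁆ ≠ 1 → χ a = 0 := by
    intro a b h1 h2
    apply hb b a
    · rw [← commutatorElement_inv]; exact inv_mem h1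
    · rw [← commutatorElement_inv]; exact inv_ne_one.mpr h2
  -- the subgroup T = Z_2 and K
  set Z := Subgroup.center G with hZdef
  set T := Subgroup.upperCentralSeries G 2 with hT
  have hTmem : ∀ x, x ∈ T ↔ ∀ g, ⁅x, g⁆ ∈ Z := by
    intro x
    rw [hT, Subgroup.mem_upperCentralSeries_succ_iff, Subgroup.upperCentralSeries_one]
  have hZT : Z ≤ T := fun x hx => (hTmem x).mpr fun g => by
    have : ⁅x, g⁆ = 1 := by
      rw [commutatorElement_eq_one_iff_mul_comm]; exact (Subgroup.mem_center_iff.mp hx g).symm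
    rw [this]; exact one_mem _
  have hZtop : ¬ (⊤ : Subgroup G) ≤ Z := by
    intro h
    have h1 : Nat.card Z = Nat.card G := by rw [top_le_iff.mp h, Subgroup.card_top]
    rw [hZ, hG] at h1
    have : p ^ 1 < p ^ n := Nat.pow_lt_pow_right hp.one_lt (by omega)
    rw [pow_one, ← h1] at this
    exact lt_irrefl _ this
  have hTcard : p ^ 2 ∣ Nat.card T := by
    obtain ⟨y, -, h2, h3⟩ := nil_step ⊤ Z inferInstance hZtop
    have hy : y ∈ T := (hTmem y).mpr h3
    obtain ⟨k, -, hk⟩ := card_subgroup_pow hp hG T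
    rw [hk]
    apply pow_dvd_pow
    by_contra hlt
    have : Z = T := Subgroup.eq_of_le_of_card_ge hZT (by
      rw [hZ, hk]
      calc p ^ k ≤ p ^ 1 := Nat.pow_le_pow_right hp.pos (by omega)
        _ = p := pow_one p)
    exact h2 (this ▸ hy)
  obtain ⟨K, hKc, hZK, hKT⟩ : ∃ K : Subgroup G, Nat.card K = p ^ 2 ∧ Z ≤ K ∧ K ≤ T := by
    obtain ⟨K, h1, h2⟩ := Sylow.exists_subgroup_card_pow_prime_le (G := T) p (n := 1) (m := 2) hTcard
      (Z.subgroupOf T) (by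
        rw [pow_one, Nat.card_congr (Subgroup.subgroupOfEquivOfLe hZT).toEquiv, hZ]) (by norm_num)
    refine ⟨K.map T.subtype, ?_, ?_, Subgroup.map_subtype_le K⟩
    · rw [Subgroup.card_map_of_injective T.subtype_injective, h1]
    · intro x hx
      exact ⟨⟨x, hZT hx⟩, h2 (by simpa [Subgroup.mem_subgroupOf] using hx), rfl⟩
  have hp2 : p < p ^ 2 := by
    calc p = p ^ 1 := (pow_one p).symm
      _ < p ^ 2 := Nat.pow_lt_pow_right hp.one_lt (by norm_num)
  obtain ⟨x, hxK, hxZ⟩ : ∃ x ∈ K, x ∉ Z := by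
    by_contra hcon
    push Not at hcon
    have : Nat.card K ≤ Nat.card Z := Subgroup.card_le_of_le hcon
    rw [hKc, hZ] at this
    omega
  have hxT := (hTmem x).mp (hKT hxK)
  -- the homomorphism
  let φ : G →* Z :=
    { toFun := fun g => ⟨⁅g, x⁆, by rw [← commutatorElement_inv]; exact inv_mem (hxT g)⟩
      map_one' := by ext; simp
      map_mul' := by
        intro g h
        ext
        have h1 : ⁅h, x⁆ ∈ Z := by rw [← commutatorElement_inv]; exact inv_mem (hxT h)
        have h2 := Subgroup.mem_center_iff.mp h1
        simp only [Subgroup.coe_mul]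
        calc ⁅g * h, x⁆ = g * ⁅h, x⁆ * (x * g⁻¹ * x⁻¹) := by
              simp only [commutatorElement_def]; group
          _ = ⁅h, x⁆ * g * (x * g⁻¹ * x⁻¹) := by rw [h2 g]
          _ = ⁅h, x⁆ * ⁅g, x⁆ := by simp only [commutatorElement_def]; group
          _ = ⁅g, x⁆ * ⁅h, x⁆ := (h2 _).symm }
  set C := φ.ker with hC
  have hCmem : ∀ g, g ∈ C ↔ ⁅g, x⁆ = 1 := by
    intro g
    rw [hC, MonoidHom.mem_ker]
    exact Subtype.ext_iff
  have hCn : C.Normal := inferInstance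
  have hCi : C.index = p := by
    have h1 : C.index ∣ p := by
      rw [hC, Subgroup.index_ker, ← hZ]
      exact Subgroup.card_subgroup_dvd_card _
    rcases (Nat.dvd_prime hp).mp h1 with h | h
    · exfalso
      rw [Subgroup.index_eq_one] at h
      apply hxZ
      rw [hZdef, Subgroup.mem_center_iff]
      intro g
      have : g ∈ C := by rw [h]; trivial
      rw [hCmem, commutatorElement_eq_one_iff_mul_comm] at this
      exact this
    · exact h
  have hZC : Z ≤ C := fun z hz => (hCmem z).mpr (by
    rw [commutatorElement_eq_one_iff_mul_comm]; exact (Subgroup.mem_center_iff.mp hz x).symm)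
  have hCc : Nat.card C = p ^ (n - 1) := by
    have := C.card_mul_index
    rw [hG, hCi] at this
    apply Nat.eq_of_mul_eq_mul_right hp.pos
    rw [this, ← pow_succ]; congr 1; omega
  have hKcent : ∀ k ∈ K, ∀ c ∈ C, c * k = k * c := by
    intro k hk c hc
    have h1 : K ⊓ Subgroup.centralizer {c} = K := by
      apply Subgroup.eq_of_le_of_card_ge inf_le_left
      have hmemx : x ∈ K ⊓ Subgroup.centralizer {c} := ⟨hxK, by
        have := (hCmem c).mp hc
        rw [commutatorElement_eq_one_iff_mul_comm] at this
        exact Subgroup.mem_centralizer_singleton_iff.mpr this.symm⟩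
      have hle : Z ≤ K ⊓ Subgroup.centralizer {c} := le_inf hZK (Subgroup.center_le_centralizer _)
      obtain ⟨j, -, hj⟩ := card_subgroup_pow hp hG (K ⊓ Subgroup.centralizer {c})
      rw [hj, hKc]
      apply Nat.pow_le_pow_right hp.pos
      by_contra hlt
      have : Z = K ⊓ Subgroup.centralizer {c} := Subgroup.eq_of_le_of_card_ge hle (by
        rw [hZ, hj]
        calc p ^ j ≤ p ^ 1 := Nat.pow_le_pow_right hp.pos (by omega)
          _ = p := pow_one p)
      exact hxZ (this ▸ hmemx)
    have h2 : k ∈ K ⊓ Subgroup.centralizer {c} := h1.symm ▸ hk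
    exact (Subgroup.mem_centralizer_singleton_iff.mp (Subgroup.mem_inf.mp h2).2).symm
  have hKC : K ≤ C := fun k hk => (hCmem k).mpr (by
    have hxC : x ∈ C := (hCmem x).mpr (by simp)
    rw [commutatorElement_eq_one_iff_mul_comm]
    exact (hKcent k hk x hxC).symm)
  -- zero set
  have hsub : ((C : Set G)ᶜ ∪ ((K : Set G) \ (Z : Set G))) ⊆ {g : G | χ g = 0} := by
    rintro g (hg | ⟨hg1, hg2⟩)
    · apply ha g x
      · rw [← commutatorElement_inv]; exact inv_mem (hxT g)
      · exact fun h => hg ((hCmem g).mpr h)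
    · have h1 := (hTmem g).mp (hKT hg1)
      by_contra hne
      apply hg2
      rw [SetLike.mem_coe, hZdef, Subgroup.mem_center_iff]
      intro h
      by_contra hne2
      apply hne
      apply ha g h (h1 h)
      rw [Ne, commutatorElement_eq_one_iff_mul_comm]
      exact fun h' => hne2 h'.symm
  have hcard : ((C : Set G)ᶜ ∪ ((K : Set G) \ (Z : Set G))).ncard
      = p ^ n - p ^ (n - 1) + p ^ 2 - p := by
    rw [Set.ncard_union_eq, Set.ncard_compl, Set.ncard_sdiff]
    · have e1 : (C : Set G).ncard = p ^ (n-1) := hCc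
      have e2 : (K : Set G).ncard = p ^ 2 := hKc
      have e3 : (Z : Set G).ncard = p := hZ
      rw [e1, e2, e3, hG]
      omega
    · exact hZK
    · exact Set.disjoint_left.mpr fun g h1 h2 => h1 (hKC h2.1)
  have heq := Set.eq_of_subset_of_ncard_le hsub (by rw [hz, hcard])
  have hzero : ∀ y ∈ C, χ y = 0 → y ∈ K := by
    intro y hy h
    have : y ∈ {g : G | χ g = 0} := h
    rw [← heq] at this
    rcases this with h | h
    · exact absurd hy h
    · exact h.1
  refine ⟨C, hCi, ?_⟩
  -- C is abelian
  suffices hCA : C ≤ Subgroup.centralizer (C : Set G) by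
    intro a ha b hb
    exact (Subgroup.mem_centralizer_iff.mp (hCA ha) b hb).symm
  by_contra hcon
  obtain ⟨y, hyC, hyA, hy⟩ := nil_step C (Subgroup.centralizer (C : Set G)) hCn hcon
  have hcen : ∀ a ∈ Subgroup.centralizer (C : Set G), ∀ c ∈ C, c * a = a * c :=
    fun a ha c hc => Subgroup.mem_centralizer_iff.mp ha c hc
  let D : Subgroup G :=
    { carrier := {d | ∃ c ∈ C, d = ⁅y, c⁆}
      one_mem' := ⟨1, one_mem _, by simp⟩
      mul_mem' := by
        rintro _ _ ⟨c, hc, rfl⟩ ⟨d, hd, rfl⟩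
        refine ⟨c * d, mul_mem hc hd, ?_⟩
        have h := hcen _ (hy d) c hc
        symm
        calc ⁅y, c * d⁆ = ⁅y, c⁆ * (c * ⁅y, d⁆) * c⁻¹ := by
              simp only [commutatorElement_def]; group
          _ = _ := by rw [h]; group
      inv_mem' := by
        rintro _ ⟨c, hc, rfl⟩
        refine ⟨c⁻¹, inv_mem hc, ?_⟩
        have h := hcen _ (hy c) c⁻¹ (inv_mem hc)
        have h' := hcen _ (inv_mem (hy c)) c⁻¹ (inv_mem hc)
        symm
        calc ⁅y, c⁻¹⁆ = (c⁻¹ * ⁅y, c⁆⁻¹) * c := by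
              simp only [commutatorElement_def]; group
          _ = _ := by rw [h']; group }
  have hDn : D.Normal := by
    constructor
    rintro _ ⟨c, hc, rfl⟩ g
    have hgc : g * c * g⁻¹ ∈ C := hCn.conj_mem c hc g
    refine ⟨g * c * g⁻¹, hgc, ?_⟩
    -- g y g⁻¹ = y * a
    have hm : ⁅y, g⁆⁻¹ ∈ Subgroup.centralizer (C : Set G) := inv_mem (hy g)
    have hyc : y * (g * c * g⁻¹) * y⁻¹ ∈ C := hCn.conj_mem _ hgc y
    have h1 := hcen _ hm _ hyc
    calc g * ⁅y, c⁆ * g⁻¹ = (⁅y, g⁆⁻¹ * (y * (g * c * g⁻¹) * y⁻¹)) * ⁅y, g⁆ * (g * c⁻¹ * g⁻¹) := by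
          simp only [commutatorElement_def]; group
      _ = ⁅y, g * c * g⁻¹⁆ := by
          rw [← h1]; simp only [commutatorElement_def]; group
  have hDne : D ≠ ⊥ := by
    intro h
    apply hyA
    rw [Subgroup.mem_centralizer_iff]
    intro c hc
    have : ⁅y, c⁆ ∈ D := ⟨c, hc, rfl⟩
    rw [h, Subgroup.mem_bot, commutatorElement_eq_one_iff_mul_comm] at this
    exact this.symm
  obtain ⟨z, ⟨c, hc, rfl⟩, hz1, hz2⟩ := normal_meets_center D hDn hDne
  have hyK := hzero y hyC (ha y c hz2 hz1)
  exact hyA (Subgroup.mem_centralizer_iff.mpr fun c hc => hKcent y hyK c hc)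

lemma class_ge {G : Type} [Group G] [Finite G] {p n : ℕ} (hp : p.Prime)
    (hG : Nat.card G = p ^ n) (hn : 1 ≤ n) (hZ : Nat.card (Subgroup.center G) = p)
    (U : Subgroup G) (hU : U.index = p) (hab : ∀ x ∈ U, ∀ y ∈ U, x * y = y * x) (m : ℕ)
    (hm : Subgroup.upperCentralSeries G m = ⊤) : n - 1 ≤ m := by
  have : Fact p.Prime := ⟨hp⟩
  have hUn : U.Normal := by
    apply Subgroup.normal_of_index_eq_minFac_card
    rw [hU, hG, Nat.Prime.pow_minFac hp (by omega)]
  have hUc : Nat.card U = p ^ (n - 1) := by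
    have := U.card_mul_index
    rw [hG, hU] at this
    apply Nat.eq_of_mul_eq_mul_right hp.pos
    rw [this, ← pow_succ]; congr 1; omega
  obtain ⟨g, hg⟩ : ∃ g, g ∉ U := by
    by_contra hcon
    push Not at hcon
    have : U = ⊤ := top_le_iff.mp fun x _ => hcon x
    rw [this, Subgroup.index_top] at hU
    exact hp.one_lt.ne hU
  have hcent : ∀ c ∈ U, c * g = g * c → c ∈ Subgroup.center G := by
    intro c hc hcg
    have hle : U ≤ Subgroup.centralizer {c} := fun u hu => by
      rw [Subgroup.mem_centralizer_singleton_iff]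
      exact hab u hu c hc
    have hgm : g ∈ Subgroup.centralizer {c} := by
      rw [Subgroup.mem_centralizer_singleton_iff]
      first | exact hcg | exact hcg.symm
    have hdvd := Subgroup.index_dvd_of_le hle
    rw [hU] at hdvd
    rcases (Nat.dvd_prime hp).mp hdvd with h | h
    · rw [Subgroup.index_eq_one] at h
      rw [Subgroup.mem_center_iff]
      intro x
      have : x ∈ Subgroup.centralizer {c} := h ▸ Subgroup.mem_top x
      rw [Subgroup.mem_centralizer_singleton_iff] at this
      exact this
    · exfalso
      have h1 := (Subgroup.centralizer {c}).card_mul_index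
      have h2 := U.card_mul_index
      rw [h, ← h2, hU] at h1
      have := Subgroup.eq_of_le_of_card_ge hle (Nat.eq_of_mul_eq_mul_right hp.pos h1).le
      exact hg (this ▸ hgm)
  have key : ∀ i, Nat.card (Subgroup.upperCentralSeries G i ⊓ U : Subgroup G) ≤ p ^ i := by
    intro i
    induction i with
    | zero => rw [Subgroup.upperCentralSeries_zero, bot_inf_eq]; simp
    | succ i ih =>
      let A := (Subgroup.upperCentralSeries G (i+1) ⊓ U : Subgroup G)
      let B := (Subgroup.upperCentralSeries G i ⊓ U : Subgroup G)
      let f : A →* B :=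
        { toFun := fun c => ⟨⁅(c : G), g⁆, ⟨Subgroup.mem_upperCentralSeries_succ_iff.mp c.2.1 g, by
            have := hUn.conj_mem _ (inv_mem c.2.2) g
            have h2 := mul_mem c.2.2 this
            rw [SetLike.mem_coe, commutatorElement_def]
            convert h2 using 1
            group⟩⟩
          map_one' := by ext; simp
          map_mul' := by
            intro c d
            ext
            simp only [Subgroup.coe_mul]
            have h1 := hUn.conj_mem _ (inv_mem c.2.2) g
            have h1' := hUn.conj_mem _ (inv_mem d.2.2) g
            have h3 := mul_mem d.2.2 h1'
            have h4 := hab _ h3 _ h1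
            calc ⁅(c : G) * d, g⁆ = c * ((d * (g * (d : G)⁻¹ * g⁻¹)) * (g * (c : G)⁻¹ * g⁻¹)) := by
                  simp only [commutatorElement_def]; group
              _ = _ := by rw [h4]; simp only [commutatorElement_def]; group }
      have hker : Nat.card f.ker ≤ p := by
        rw [← hZ]
        have hin : ∀ a : f.ker, ((a : A) : G) ∈ Subgroup.center G := by
          intro a
          apply hcent _ a.1.2.2
          have := a.2
          rw [MonoidHom.mem_ker] at this
          have := Subtype.ext_iff.mp this
          exact commutatorElement_eq_one_iff_mul_comm.mp this
        apply Nat.card_le_card_of_injective (fun a : f.ker => (⟨_, hin a⟩ : Subgroup.center G))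
        intro a b h
        have := congrArg (Subtype.val) h
        exact Subtype.ext (Subtype.ext this)
      have h1 := f.ker.card_mul_index
      rw [Subgroup.index_ker] at h1
      have h2 : Nat.card f.range ≤ p ^ i := (Subgroup.card_le_card_group _).trans ih
      change Nat.card A ≤ _
      rw [← h1, pow_succ']
      exact Nat.mul_le_mul hker h2
  have := key m
  rw [hm, top_inf_eq, hUc] at this
  exact (Nat.pow_le_pow_iff_right hp.one_lt).mp this

lemma schur_scalar {G : Type} [Group G] (V : FDRep ℂ G) (hV : Simple V) (f : V →ₗ[ℂ] V)
    (h : ∀ g, f * V.ρ g = V.ρ g * f) : ∃ c : ℂ, f = c • (1 : V →ₗ[ℂ] V) := by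
  let F : V ⟶ V :=
    { hom := FGModuleCat.ofHom f
      comm := fun g => by
        ext v
        exact LinearMap.congr_fun (h g) v }
  obtain ⟨c, hc⟩ := endomorphism_simple_eq_smul_id ℂ F
  refine ⟨c, ?_⟩
  have h1 : (c • 𝟙 V : V ⟶ V).hom.hom.hom = f := by rw [hc]; rfl
  rw [← h1]
  rfl

lemma not_all_scalar {G : Type} [Group G] (V : FDRep ℂ G) (hV : Simple V)
    (hnl : 1 < Module.finrank ℂ V) : ¬ ∀ g, ∃ c : ℂ, V.ρ g = c • (1 : V →ₗ[ℂ] V) := by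
  intro hall
  have h1 : ∀ f : V →ₗ[ℂ] V, ∃ c : ℂ, c • (1 : V →ₗ[ℂ] V) = f := by
    intro f
    obtain ⟨c, hc⟩ := schur_scalar V hV f (fun g => by
      obtain ⟨c, hc⟩ := hall g
      rw [hc]; simp)
    exact ⟨c, hc.symm⟩
  have h2 : Module.finrank ℂ (V →ₗ[ℂ] V) ≤ 1 := finrank_le_one _ h1
  rw [Module.finrank_linearMap] at h2
  nlinarith

theorem stmt3 {G : Type} [Group G] [Fintype G] {p n : ℕ} (hp : p.Prime)
    (hG : Fintype.card G = p ^ n)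
    (V : FDRep ℂ G) (hV : Simple V)
    (hnl : 1 < Module.finrank ℂ V)
    (hz : {g : G | V.character g = 0}.ncard = p ^ n - p ^ (n - 1) + p ^ 2 - p) :
    nilClass G = n - 1 ∧
      ∃ U : Subgroup G, U.index = p ∧ ∀ x ∈ U, ∀ y ∈ U, x * y = y * x := by
  have : Fact p.Prime := ⟨hp⟩
  rw [← Nat.card_eq_fintype_card] at hG
  have : Group.IsNilpotent G := (IsPGroup.of_card hG).isNilpotent
  -- the subgroup acting by scalars
  let S : Subgroup G :=
    { carrier := {g | ∃ c : ℂ, V.ρ g = c • (1 : V →ₗ[ℂ] V)}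
      one_mem' := ⟨1, by simp⟩
      mul_mem' := by
        rintro a b ⟨c, hc⟩ ⟨d, hd⟩
        exact ⟨c * d, by rw [map_mul, hc, hd, smul_mul_smul_comm, one_mul]⟩
      inv_mem' := by
        rintro a ⟨c, hc⟩
        have h1 : V.ρ a * V.ρ a⁻¹ = 1 := by rw [← map_mul, mul_inv_cancel, map_one]
        rw [hc, smul_mul_assoc, one_mul] at h1
        have hc0 : c ≠ 0 := by
          rintro rfl
          rw [zero_smul] at h1
          have : Nontrivial V := Module.nontrivial_of_finrank_pos (R := ℂ) (by omega)
          exact zero_ne_one h1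
        exact ⟨c⁻¹, by rw [← h1, smul_smul, inv_mul_cancel₀ hc0, one_smul]⟩ }
  have hchar : ∀ (s : G) (c : ℂ), V.ρ s = c • (1 : V →ₗ[ℂ] V) → ∀ g,
      V.character (s * g) = c * V.character g := by
    intro s c hc g
    change LinearMap.trace ℂ V (V.ρ (s * g)) = c * LinearMap.trace ℂ V (V.ρ g)
    rw [map_mul, hc, smul_mul_assoc, one_mul, map_smul, smul_eq_mul]
  have hScomm : ∀ g, (∀ h, V.ρ g * V.ρ h = V.ρ h * V.ρ g) → g ∈ S :=
    fun g h => schur_scalar V hV _ h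
  have hZS : Subgroup.center G ≤ S := fun z hz => hScomm z fun h => by
    rw [← map_mul, ← map_mul, Subgroup.mem_center_iff.mp hz h]
  have hStop : S ≠ ⊤ := by
    intro h
    apply not_all_scalar V hV hnl
    intro g
    have : g ∈ S := h ▸ Subgroup.mem_top g
    exact this
  have hn : 3 ≤ n := by
    by_contra hlt
    apply hStop
    refine top_le_iff.mp (le_trans ?_ hZS)
    have hcl : Subgroup.upperCentralSeries G 1 = ⊤ := by
      rcases (by omega : n = 2 ∨ n ≤ 1) with rfl | h
      · exact class_le hp hG le_rfl
      · rw [Subgroup.upperCentralSeries_one]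
        by_contra hne
        obtain ⟨k, hk, hk'⟩ := card_subgroup_pow hp hG (Subgroup.center G)
        have h0 : k = n := by
          have hnt : Nontrivial G := by
            by_contra hnt
            rw [not_nontrivial_iff_subsingleton] at hnt
            exact hne (Subsingleton.elim _ _)
          have hc := (IsPGroup.of_card hG).bot_lt_center
          have : k ≠ 0 := by
            rintro rfl
            rw [pow_zero, Subgroup.card_eq_one] at hk'
            exact hc.ne hk'.symm
          omega
        exact hne (Subgroup.eq_top_of_card_eq _ (by rw [hk', hG, h0]))
    rw [← hcl, Subgroup.upperCentralSeries_one]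
  have hnt : Nontrivial G := by
    have : 1 < Nat.card G := by rw [hG]; exact Nat.one_lt_pow (by omega) hp.one_lt
    exact Finite.one_lt_card_iff_nontrivial.mp this
  have hSdvd : Nat.card S ∣ p ^ n - p ^ (n - 1) + p ^ 2 - p := by
    rw [← hz]
    apply dvd_of_invariant
    rintro t ht s ⟨c, hc⟩
    change V.character (t * s) = 0
    have ht' : V.character t = 0 := ht
    rw [FDRep.char_mul_comm, hchar s c hc, ht', mul_zero]
  have hS1 : Nat.card S ≤ p := by
    obtain ⟨k, -, hk⟩ := card_subgroup_pow hp hG S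
    rw [hk]
    by_contra hlt
    have hk2 : 2 ≤ k := by
      by_contra h
      apply hlt
      calc p ^ k ≤ p ^ 1 := Nat.pow_le_pow_right hp.pos (by omega)
        _ = p := pow_one p
    have h2 : p ^ 2 ∣ p ^ n - p ^ (n - 1) + p ^ 2 - p := (pow_dvd_pow p hk2).trans (hk ▸ hSdvd)
    have h3 : p ^ 2 ∣ p ^ n - p ^ (n - 1) + p ^ 2 :=
      dvd_add (Nat.dvd_sub (pow_dvd_pow p (by omega)) (pow_dvd_pow p (by omega))) dvd_rfl
    have hp2 : p < p ^ 2 := by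
      calc p = p ^ 1 := (pow_one p).symm
        _ < p ^ 2 := Nat.pow_lt_pow_right hp.one_lt (by norm_num)
    have h4 := Nat.dvd_sub h3 h2
    rw [Nat.sub_sub_self (by omega)] at h4
    exact absurd (Nat.le_of_dvd hp.pos h4) (by omega)
  have hZp : p ≤ Nat.card (Subgroup.center G) := by
    have hc := (IsPGroup.of_card hG).bot_lt_center
    obtain ⟨k, -, hk⟩ := card_subgroup_pow hp hG (Subgroup.center G)
    rw [hk]
    apply Nat.le_self_pow
    rintro rfl
    rw [pow_zero, Subgroup.card_eq_one] at hk
    exact hc.ne hk.symm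
  have hZS' : Subgroup.center G = S := Subgroup.eq_of_le_of_card_ge hZS (hS1.trans hZp)
  have hZ : Nat.card (Subgroup.center G) = p := le_antisymm (hZS' ▸ hS1) hZp
  -- faithfulness
  have hker : V.ρ.ker = ⊥ := by
    by_contra hne
    have hKS : V.ρ.ker ≤ S := fun g hg => ⟨1, by rw [one_smul]; exact hg⟩
    have hKeq : V.ρ.ker = S := by
      apply Subgroup.eq_of_le_of_card_ge hKS
      obtain ⟨k, -, hk⟩ := card_subgroup_pow hp hG V.ρ.ker
      rw [hk]
      refine hS1.trans (Nat.le_self_pow ?_ p)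
      rintro rfl
      rw [pow_zero, Subgroup.card_eq_one] at hk
      exact hne hk
    obtain ⟨y, -, h2, h3⟩ := nil_step ⊤ V.ρ.ker inferInstance
      (fun h => hStop (top_le_iff.mp (h.trans hKS)))
    apply h2
    rw [hKeq]
    apply hScomm
    intro h
    have h4 : V.ρ ⁅y, h⁆ = 1 := h3 h
    rw [← map_mul, ← map_mul]
    have : y * h = ⁅y, h⁆ * (h * y) := by rw [commutatorElement_def]; group
    rw [this, map_mul, h4, one_mul]
  have hP : ∀ z ∈ Subgroup.center G, z ≠ 1 → ∀ g,
      V.character (z * g) = V.character g → V.character g = 0 := by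
    intro z hz hz1 g hg
    obtain ⟨c, hc⟩ := hZS hz
    rw [hchar z c hc g] at hg
    by_contra hne
    have hc1 : c = 1 := mul_right_cancel₀ hne (by rw [hg, one_mul])
    apply hz1
    have : z ∈ V.ρ.ker := by rw [MonoidHom.mem_ker, hc, hc1, one_smul]
    rw [hker] at this
    exact this
  obtain ⟨U, hU, hab⟩ := core hp hG hn V.character (fun g h => FDRep.char_conj V g h) hZ hP hz
  refine ⟨?_, U, hU, hab⟩
  apply le_antisymm
  · exact Nat.sInf_le (class_le hp hG (by omega))
  · exact le_csInf ⟨n - 1, class_le hp hG (by omega)⟩ fun m hm =>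
      class_ge hp hG (by omega) hZ U hU hab m hm
end

section
/- Let p be a prime and let G be a finite p-group of order p^n with subgroups U and V such that G = UV, both U and V have index p in G, U is abelian, V is non-abelian of maximal class (i.e., V has nilpotency class n − 2, where |V| = p^(n−1)), and the center of G has order p. Then G has maximal class, i.e., the nilpotency class of G is n − 1. -/
theorem aux_top {G : Type*} [Group G] {p : ℕ} (hp : p.Prime) (U H : Subgroup G)
    (hUi : U.index = p) (hUH : U ≤ H) (v : G) (hv : v ∉ U) (hvH : v ∈ H) : H = ⊤ := by
  have h := Subgroup.relIndex_mul_index hUH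
  rw [hUi] at h
  have h2 : H.index ∣ p := ⟨_, by rw [mul_comm]; exact h.symm⟩
  rcases (Nat.dvd_prime hp).1 h2 with h3 | h3
  · exact Subgroup.index_eq_one.1 h3
  · rw [h3] at h
    have h4 : U.relIndex H = 1 := by
      have := hp.pos
      exact Nat.eq_of_mul_eq_mul_right this (by simpa using h)
    exact absurd (Subgroup.relIndex_eq_one.1 h4 hvH) hv

theorem aux_card {G : Type*} [Group G] [Finite G] {p : ℕ} (hp : p.Prime) (U : Subgroup G)
    [hN : U.Normal] (hUi : U.index = p) (hUab : ∀ x ∈ U, ∀ y ∈ U, x * y = y * x)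
    (hZ : Nat.card (Subgroup.center G) = p) (k : ℕ) :
    Nat.card (Subgroup.upperCentralSeries G k ⊓ U : Subgroup G) ≤ p ^ k := by
  obtain ⟨v, hv⟩ : ∃ v, v ∉ U := by
    by_contra! h
    have : U = ⊤ := by ext x; simp [h x]
    rw [this, Subgroup.index_top] at hUi
    exact hp.one_lt.ne hUi
  induction k with
  | zero => simp
  | succ k ih =>
    let f : (Subgroup.upperCentralSeries G (k+1) ⊓ U : Subgroup G) →* G :=
      MonoidHom.mk' (fun u => (u : G) * v * (u : G)⁻¹ * v⁻¹) (by
        rintro ⟨a, ha⟩ ⟨b, hb⟩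
        have h1 : v * a⁻¹ * v⁻¹ ∈ U := hN.conj_mem _ (U.inv_mem ha.2) v
        have h2 : b * v * b⁻¹ * v⁻¹ ∈ U := by
          have := U.mul_mem hb.2 (hN.conj_mem _ (U.inv_mem hb.2) v)
          simpa [mul_assoc] using this
        have h3 := hUab _ h1 _ h2
        calc a * b * v * (a * b)⁻¹ * v⁻¹
            = a * ((b * v * b⁻¹ * v⁻¹) * (v * a⁻¹ * v⁻¹)) := by group
          _ = a * v * a⁻¹ * v⁻¹ * (b * v * b⁻¹ * v⁻¹) := by rw [← h3]; group)
    have hr : f.range ≤ Subgroup.upperCentralSeries G k ⊓ U := by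
      rintro _ ⟨⟨u, hu⟩, rfl⟩
      refine ⟨Subgroup.mem_upperCentralSeries_succ_iff.1 hu.1 v, ?_⟩
      have := U.mul_mem hu.2 (hN.conj_mem _ (U.inv_mem hu.2) v)
      simpa [f, mul_assoc] using this
    have hk : f.ker.map (Subgroup.subtype _) ≤ Subgroup.center G := by
      rintro _ ⟨⟨u, hu⟩, hf, rfl⟩
      have hf' : u * v * u⁻¹ * v⁻¹ = 1 := hf
      have ht := aux_top hp U (Subgroup.centralizer {u}) hUi (fun x hx => by
        rw [Subgroup.mem_centralizer_singleton_iff]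
        exact hUab _ hx _ hu.2) v hv (by
        rw [Subgroup.mem_centralizer_singleton_iff]
        have := mul_inv_eq_one.1 hf'
        exact (mul_inv_eq_iff_eq_mul.1 this).symm)
      rw [Subgroup.mem_center_iff]
      intro g
      have hg : g ∈ Subgroup.centralizer {u} := by rw [ht]; trivial
      exact (Subgroup.mem_centralizer_singleton_iff.1 hg)
    have h1 : Nat.card f.ker ≤ p := by
      rw [← hZ, ← Subgroup.card_map_of_injective (K := f.ker) (Subgroup.subtype_injective _)]
      exact Subgroup.card_le_of_le hk
    have h2 : Nat.card f.range ≤ p ^ k := (Subgroup.card_le_of_le hr).trans ih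
    rw [← Subgroup.card_mul_index f.ker, Subgroup.index_ker, pow_succ, mul_comm]
    exact Nat.mul_le_mul h2 h1

theorem aux_comm {G : Type*} [Group G] [Finite G] {p j : ℕ} (hp : p.Prime) (hj : j ≤ 2)
    (hG : Nat.card G = p ^ j) (x y : G) : x * y = y * x := by
  have := Fact.mk hp
  interval_cases j
  · have : Subsingleton G := (Nat.card_eq_one_iff_unique.1 (by simpa using hG)).1
    exact Subsingleton.elim _ _
  · have : IsCyclic G := isCyclic_of_prime_card (p := p) (by simpa using hG)
    exact (IsCyclic.isMulCommutative (α := G)).is_comm.comm x y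
  · exact (IsPGroup.isMulCommutative_of_card_eq_prime_sq hG).is_comm.comm x y

theorem aux_index {G : Type*} [Group G] [Finite G] {p n : ℕ} (hp : p.Prime)
    (hG : Nat.card G = p ^ n) (k : ℕ) :
    ∃ j ≤ n - k, (Subgroup.upperCentralSeries G k).index = p ^ j := by
  have := Fact.mk hp
  induction k with
  | zero => exact ⟨n, by simp, by simpa using hG⟩
  | succ k ih =>
    obtain ⟨j, hj, hi⟩ := ih
    have e : Subgroup.upperCentralSeries G (k+1) = Subgroup.comap
      (QuotientGroup.mk' (Subgroup.upperCentralSeries G k)) (Subgroup.center _) :=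
      Subgroup.upperCentralSeriesStep_eq_comap_center (Subgroup.upperCentralSeries G k)
    rw [e, Subgroup.index_comap_of_surjective _ (QuotientGroup.mk'_surjective _)]
    have hc : Nat.card (G ⧸ Subgroup.upperCentralSeries G k) = p ^ j := hi
    have hm := Subgroup.card_mul_index (Subgroup.center (G ⧸ Subgroup.upperCentralSeries G k))
    rw [hc] at hm
    rcases Nat.eq_zero_or_pos j with rfl | h0
    · exact ⟨0, Nat.zero_le _, by
        rw [pow_zero] at hm ⊢
        exact Nat.dvd_one.1 (Dvd.intro_left _ hm)⟩
    · obtain ⟨i, hi0, hi⟩ := IsPGroup.card_center_eq_prime_pow hc h0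
      obtain ⟨l, hl, hl'⟩ := (Nat.dvd_prime_pow hp).1 (Dvd.intro_left _ hm)
      refine ⟨l, ?_, hl'⟩
      rw [hi, hl', ← pow_add] at hm
      have := Nat.pow_right_injective hp.two_le hm
      omega

theorem stmt5 {G : Type*} [Group G] [Fintype G] {p n : ℕ} (hp : p.Prime)
    (hG : Fintype.card G = p ^ n) (U V : Subgroup G)
    (hUV : ∀ g : G, ∃ u ∈ U, ∃ v ∈ V, g = u * v)
    (hUi : U.index = p) (hVi : V.index = p)
    (hUab : ∀ x ∈ U, ∀ y ∈ U, x * y = y * x)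
    (hVna : ¬ ∀ x ∈ V, ∀ y ∈ V, x * y = y * x)
    (hVmc : nilClass V = n - 2)
    (hZ : Nat.card (Subgroup.center G) = p) :
    nilClass G = n - 1 := by
  have hG' : Nat.card G = p ^ n := by rw [Nat.card_eq_fintype_card, hG]
  have hn : 3 ≤ n := by
    by_contra! h
    exact hVna fun x _ y _ => aux_comm hp (by omega) hG' x y
  have : U.Normal := Subgroup.normal_of_index_eq_minFac_card (by
    rw [hUi, hG', Nat.Prime.pow_minFac hp (by omega)])
  have hU : Nat.card U = p ^ (n - 1) := by
    have h := Subgroup.card_mul_index U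
    rw [hUi, hG', show n = (n - 1) + 1 by omega, pow_succ] at h
    exact Nat.eq_of_mul_eq_mul_right hp.pos h
  have hub : Subgroup.upperCentralSeries G (n - 1) = ⊤ := by
    obtain ⟨j, hj, hi⟩ := aux_index hp hG' (n - 2)
    rw [show n - 1 = n - 2 + 1 by omega, eq_top_iff]
    rintro x -
    rw [Subgroup.mem_upperCentralSeries_succ_iff]
    intro y
    have hc := aux_comm (G := G ⧸ Subgroup.upperCentralSeries G (n - 2)) hp
      (by omega : j ≤ 2) hi (QuotientGroup.mk x) (QuotientGroup.mk y)
    rw [← QuotientGroup.eq_one_iff, commutatorElement_def]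
    simp only [QuotientGroup.mk_mul, QuotientGroup.mk_inv]
    rw [hc]
    group
  apply le_antisymm
  · exact Nat.sInf_le hub
  · refine le_csInf ⟨_, hub⟩ fun m hm => ?_
    have h := aux_card hp U hUi hUab hZ m
    rw [show Subgroup.upperCentralSeries G m = ⊤ from hm, top_inf_eq, hU] at h
    exact (Nat.pow_le_pow_iff_right hp.one_lt).1 h
end

section
/- Let G be a finite group and let χ be a faithful irreducible complex character of G. Then χ vanishes at every element of Z₂(G) − Z(G), where Z(G) is the center and Z₂(G) is the second center of G. -/
open CategoryTheory

theorem schur_center {G : Type} [Group G]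
    (V : FDRep ℂ G) (hV : Simple V) (z : G) (hz : ∀ y, y * z = z * y) :
    ∃ c : ℂ, V.ρ z = c • (1 : Module.End ℂ V) := by
  let f : V ⟶ V := ⟨Action.ρ V z, fun y => by
    have h1 : Action.ρ V (z * y) = Action.ρ V (y * z) := by rw [hz y]
    rw [map_mul, map_mul] at h1
    exact h1⟩
  obtain ⟨c, hc⟩ := endomorphism_simple_eq_smul_id ℂ f
  refine ⟨c, ?_⟩
  have h2 : (c • 𝟙 V : V ⟶ V).hom.hom.hom = f.hom.hom.hom := by rw [hc]
  exact h2.symm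

/-- If `χ` is a faithful irreducible complex character of a finite group `G`,
then `χ` vanishes at every element of `Z₂(G) - Z(G)`. -/
theorem stmt8 {G : Type} [Group G] [Fintype G]
    (V : FDRep ℂ G) (hV : Simple V)
    (hfaithful : Function.Injective ⇑V.ρ) :
    ∀ g ∈ upperCentralSeries G 2, g ∉ Subgroup.center G → V.character g = 0 := by
  intro g hg hgc
  rw [Subgroup.mem_center_iff] at hgc
  push Not at hgc
  obtain ⟨y, hy⟩ := hgc
  have hz := Subgroup.mem_upperCentralSeries_succ_iff.mp hg y
  rw [commutatorElement_def, Subgroup.upperCentralSeries_one, Subgroup.mem_center_iff] at hz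
  obtain ⟨c, hc⟩ := schur_center V hV _ hz
  have hg' : g = (g * y * g⁻¹ * y⁻¹) * (y * g * y⁻¹) := by
    group
  have h1 : V.character g = c * V.character g := by
    conv_lhs => rw [hg']
    rw [← FDRep.char_conj V g y]
    simp only [FDRep.character]
    rw [map_mul V.ρ (g * y * g⁻¹ * y⁻¹), hc, smul_mul_assoc, one_mul, map_smul, smul_eq_mul]
  by_contra hne
  have hc1 : c = 1 := by
    have : (c - 1) * V.character g = 0 := by linear_combination -h1
    rcases mul_eq_zero.mp this with h | h
    · linear_combination h
    · exact absurd h hne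
  rw [hc1, one_smul, ← map_one V.ρ] at hc
  exact hy (commutatorElement_eq_one_iff_mul_comm.mp ((commutatorElement_def g y).trans (hfaithful hc))).symm
end

section
/- Let p be a prime with p > 3 and let G be a finite p-group of order p^n. If G has a non-linear irreducible complex character χ that vanishes at exactly p^n − p^(n−1) + p^2 − p elements of G, then |G| ≤ p^(r+1), where r is the smallest prime that does not divide p − 1. -/
open CategoryTheory


theorem simple_inv {G : Type} [Group G] (V : FDRep ℂ G) (hV : Simple V)
    (W : Submodule ℂ V) (hW : ∀ g, ∀ w ∈ W, V.ρ g w ∈ W) : W = ⊥ ∨ W = ⊤ := by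
  let σ : Representation ℂ G W :=
    { toFun := fun g => (V.ρ g).restrict (hW g)
      map_one' := by ext; simp
      map_mul' := by intro a b; ext; simp }
  let X : FDRep ℂ G := FDRep.of σ
  let f : X ⟶ V := ⟨⟨ModuleCat.ofHom W.subtype⟩, by intro g; rfl⟩
  have : Mono f := ConcreteCategory.mono_of_injective f (by
    intro a b h
    exact Subtype.ext h)
  by_cases hf : f = 0
  · left
    rw [eq_bot_iff]
    intro w hw
    have : f.hom.hom.hom (⟨w, hw⟩ : W) = (0 : X ⟶ V).hom.hom.hom (⟨w, hw⟩ : W) := by rw [hf]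
    exact this
  · right
    have : IsIso f := isIso_of_mono_of_nonzero hf
    rw [eq_top_iff]
    intro w _
    have h2 := (FDRep.isoToLinearEquiv (asIso f)).apply_symm_apply w
    rw [← h2]
    exact ((FDRep.isoToLinearEquiv (asIso f)).symm w : W).2

open Polynomial in
theorem poly_R {p : ℕ} (hp : p.Prime) : ∃ R : ℤ[X],
    (1 + X) ^ p = 1 + X ^ p + (p : ℤ[X]) * (1 + X * R) * X := by
  obtain ⟨r, hr⟩ := exists_add_pow_prime_eq hp (1 : ℤ[X]) X
  have h0 : r.eval 0 = 1 := by
    have h1 := congrArg (fun q => (derivative q).eval 0) hr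
    have hp2 := hp.two_le
    have h3 : p - 1 ≠ 0 := by omega
    simp [derivative_pow, h3] at h1
    have : (p : ℤ) ≠ 0 := by exact_mod_cast hp.ne_zero
    exact (mul_left_cancel₀ this (by linarith))
  have h2 : X ∣ r - 1 := by
    rw [X_dvd_iff, coeff_sub, coeff_zero_eq_eval_zero, h0]; simp
  obtain ⟨R, hR⟩ := h2
  refine ⟨R, ?_⟩
  have : r = 1 + X * R := by rw [← hR]; ring
  rw [hr, this]; ring

open Polynomial in
theorem T_nil {H : Type*} [AddCommGroup H] {p : ℕ} (hp : p.Prime) (T : Module.End ℤ H)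
    (hT : (1 + T) ^ p = 1) (m : ℕ) (a : H) (ha : p ^ m • a = 0) : (T ^ (p * m)) a = 0 := by
  obtain ⟨R, hR⟩ := poly_R hp
  have h1 := congrArg (aeval T) hR
  simp only [map_pow, map_add, map_one, aeval_X, hT] at h1
  have h2 : T ^ p = aeval T (-((1 + X * R) * X) * (p : ℤ[X])) := by
    have : aeval T ((p : ℤ[X]) * (1 + X * R) * X) = - T ^ p := by
      rw [eq_neg_iff_add_eq_zero, add_comm]
      rw [add_assoc] at h1
      exact left_eq_add.mp h1
    rw [← neg_eq_iff_eq_neg.mpr this, ← map_neg]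
    congr 1; ring
  rw [pow_mul, h2, ← map_pow, mul_pow, map_mul, Module.End.mul_apply]
  have : (aeval T ((p : ℤ[X]) ^ m)) a = p ^ m • a := by
    have : ((p : ℤ[X]) ^ m) = ((p ^ m : ℕ) : ℤ[X]) := by push_cast; rfl
    rw [this, map_natCast, Module.End.natCast_apply]
  rw [this, ha, map_zero]

open Polynomial in
theorem T_tors {H : Type*} [AddCommGroup H] {p : ℕ} (hp : p.Prime) (T : Module.End ℤ H)
    (hT : (1 + T) ^ p = 1) (a : H) (ha : (T ^ p) a = 0) : p • T a = 0 := by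
  obtain ⟨R, hR⟩ := poly_R hp
  have h1 := congrArg (fun q => aeval T q a) hR
  simp only [map_pow, map_add, map_one, aeval_X, hT, LinearMap.add_apply, ha, map_mul,
    map_natCast, Module.End.mul_apply] at h1
  rw [add_zero, left_eq_add] at h1
  have h3 : (aeval T (1 + X * R)) (p • T a) = 0 := by
    rw [map_nsmul]
    simpa using h1
  have h4 : (aeval T ((X : ℤ[X]) ^ p)) (p • T a) = 0 := by
    rw [map_nsmul, map_pow, aeval_X, ← Module.End.mul_apply, ← pow_succ, pow_succ',
      Module.End.mul_apply, ha]; simp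
  have hc : IsCoprime (1 + X * R) (X ^ p : ℤ[X]) := by
    apply IsCoprime.pow_right
    exact ⟨1, -R, by ring⟩
  obtain ⟨u, v, huv⟩ := hc
  have h5 : p • T a = (aeval T (u * (1 + X * R) + v * X ^ p)) (p • T a) := by
    rw [huv, map_one, Module.End.one_apply]
  rw [h5, map_add, LinearMap.add_apply, map_mul (aeval T) u, map_mul (aeval T) v,
    Module.End.mul_apply, Module.End.mul_apply, h3, h4, map_zero, map_zero, add_zero]

theorem iter_T_eq {p : ℕ} {M : Type*} [AddCommGroup M] (k : ℕ) (f : ZMod p → M) :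
    ((fwdDiff_aux.fwdDiffₗ (ZMod p) M 1) ^ k) f = (fwdDiff 1)^[k] f := by
  rw [Module.End.pow_apply, fwdDiff_aux.coe_fwdDiffₗ]

theorem shift_pow_p {p : ℕ} {M : Type*} [AddCommGroup M] :
    (1 + fwdDiff_aux.fwdDiffₗ (ZMod p) M 1) ^ p = 1 := by
  rw [add_comm]
  ext f y
  have := fwdDiff_aux.shiftₗ_pow_apply (1 : ZMod p) f p y
  unfold fwdDiff_aux.shiftₗ at this
  rw [this]; simp

theorem const_of_diff {p : ℕ} [NeZero p] {M : Type*} [AddCommGroup M] (f : ZMod p → M)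
    (B : AddSubgroup M) (h : ∀ i, fwdDiff 1 f i ∈ B) (i : ZMod p) : f i - f 0 ∈ B := by
  have key : ∀ k : ℕ, f (k : ZMod p) - f 0 ∈ B := by
    intro k
    induction k with
    | zero => simp
    | succ k ih =>
      have := B.add_mem (h k) ih
      simpa [fwdDiff] using this
  simpa using key i.val

theorem exists_big {p r N : ℕ} (hp : p.Prime) {M : Type*} [AddCommGroup M]
    (e : ZMod p →+ M) (he' : ∀ m, p • m = 0 → ∃ k, e k = m)
    (A : AddSubgroup (ZMod p → M)) (hfin : Finite A)
    (hsh : ∀ u ∈ A, fwdDiff 1 u ∈ A)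
    (hN : ∀ u ∈ A, p ^ N • u = 0)
    (hc : ∀ u ∈ A, fwdDiff 1 u = 0 → p • u = 0)
    (hcard : p ^ r < Nat.card A) :
    ∃ a ∈ A, (fwdDiff 1)^[r + 1] a = 0 ∧ (fwdDiff 1)^[r] a ≠ 0 := by
  have : NeZero p := ⟨hp.ne_zero⟩
  set T := fwdDiff_aux.fwdDiffₗ (ZMod p) M 1 with hTdef
  have hT : ∀ u, T u = fwdDiff 1 u := fun u => rfl
  have hTA : ∀ k, ∀ u ∈ A, (T ^ k) u ∈ A := by
    intro k
    induction k with
    | zero => intro u hu; simpa using hu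
    | succ k ih => intro u hu; rw [pow_succ', Module.End.mul_apply]; exact hsh _ (ih u hu)
  have hex : ∃ a ∈ A, (T ^ r) a ≠ 0 := by
    by_contra hcon
    push Not at hcon
    let K : ℕ → AddSubgroup (ZMod p → M) := fun k => A ⊓ (T ^ k).toAddMonoidHom.ker
    have hK : ∀ k, Nat.card (K k) ≤ p ^ k := by
      intro k
      induction k with
      | zero =>
        have : K 0 = ⊥ := by
          rw [eq_bot_iff]; rintro u ⟨_, hu⟩
          simpa [AddMonoidHom.mem_ker] using hu
        rw [this]; simp
      | succ k ih =>
        have hfk : ∀ k, Finite (K k) := fun k =>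
          Set.Finite.subset (Set.toFinite (A : Set (ZMod p → M))) (fun _ h => h.1)
        let φ : K (k + 1) →+ K k :=
          (T.toAddMonoidHom.comp (K (k+1)).subtype).codRestrict (K k) (by
            rintro ⟨u, hu1, hu2⟩
            refine ⟨hsh u hu1, ?_⟩
            have : (T ^ (k+1)) u = 0 := hu2
            rw [pow_succ, Module.End.mul_apply] at this
            exact this)
        have h1 : Nat.card (K (k+1)) = Nat.card φ.ker * Nat.card φ.range := by
          rw [← AddSubgroup.index_ker]; exact (AddSubgroup.card_mul_index _).symm
        have h2 : Nat.card φ.range ≤ p ^ k := by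
          have := hfk k
          exact le_trans (Nat.card_le_card_of_injective _ Subtype.val_injective) ih
        have h3 : Nat.card φ.ker ≤ p := by
          have hu : ∀ u : φ.ker, ∃ z, e z = (u.1.1 0) ∧ ∀ i, u.1.1 i = u.1.1 0 := by
            rintro ⟨⟨u, hu1, hu2⟩, hu3⟩
            have h0 : fwdDiff 1 u = 0 := congrArg Subtype.val hu3
            obtain ⟨z, hz⟩ := he' (u 0) (by simpa using congrFun (hc u hu1 h0) 0)
            refine ⟨z, hz, fun i => ?_⟩
            have := const_of_diff u ⊥ (by intro i; rw [h0]; simp) i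
            simpa [sub_eq_zero] using this
          choose z hz1 hz2 using hu
          have : Function.Injective z := by
            intro u v huv
            apply Subtype.ext; apply Subtype.ext; funext i
            rw [hz2 u, hz2 v, ← hz1 u, ← hz1 v, huv]
          calc Nat.card φ.ker ≤ Nat.card (ZMod p) := Nat.card_le_card_of_injective z this
            _ = p := Nat.card_zmod p
        rw [h1, pow_succ, mul_comm]
        exact Nat.mul_le_mul h2 h3
    have : K r = A := by
      apply le_antisymm inf_le_left
      intro u hu
      exact ⟨hu, hcon u hu⟩
    have h := hK r
    rw [this] at h
    omega
  obtain ⟨a, haA, ha⟩ := hex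
  have hnil : ∃ m, (T ^ m) a = 0 := ⟨_, T_nil hp T shift_pow_p N a (hN a haA)⟩
  classical
  have hm := Nat.find_spec hnil
  have hmin := fun k => Nat.find_min hnil (m := k)
  set m := Nat.find hnil
  have hmr : r + 1 ≤ m := by
    by_contra hlt
    apply ha
    have : r = (r - m) + m := by omega
    rw [this, pow_add, Module.End.mul_apply, hm, map_zero]
  refine ⟨(T ^ (m - (r + 1))) a, hTA _ _ haA, ?_, ?_⟩
  · rw [← iter_T_eq, ← Module.End.mul_apply, ← pow_add]
    rwa [show r + 1 + (m - (r + 1)) = m by omega]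
  · rw [← iter_T_eq, ← Module.End.mul_apply, ← pow_add]
    exact hmin _ (by omega)

theorem comp_iter {p : ℕ} {M : Type*} [AddCommGroup M] (e : ZMod p →+ M) (f : ZMod p → ZMod p)
    (k : ℕ) : (fwdDiff (1 : ZMod p))^[k] (fun i => e (f i)) = fun i => e ((fwdDiff 1)^[k] f i) := by
  induction k generalizing f with
  | zero => rfl
  | succ k ih =>
    rw [Function.iterate_succ_apply, Function.iterate_succ_apply, ← ih]
    congr 1
    funext i
    simp [fwdDiff]

theorem key_L {p r N : ℕ} (hp : p.Prime) (hr1 : 1 ≤ r) (hrp : r + 1 ≤ p)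
    {M : Type*} [AddCommGroup M]
    (e : ZMod p →+ M) (he : Function.Injective e) (he' : ∀ m, p • m = 0 → ∃ k, e k = m)
    (A : AddSubgroup (ZMod p → M)) (hfin : Finite A)
    (hsh : ∀ u ∈ A, fwdDiff 1 u ∈ A)
    (hN : ∀ u ∈ A, p ^ N • u = 0)
    (hc : ∀ u ∈ A, fwdDiff 1 u = 0 → p • u = 0)
    (hcard : p ^ r < Nat.card A) (f : ZMod p → ZMod p) (hf : (fwdDiff 1)^[r + 1] f = 0) :
    ∃ w : M, (fun i => w + e (f i)) ∈ A := by
  have : NeZero p := ⟨hp.ne_zero⟩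
  have : Fact p.Prime := ⟨hp⟩
  obtain ⟨a, haA, ha1, ha2⟩ := exists_big hp e he' A hfin hsh hN hc hcard
  have hpa : p • fwdDiff 1 a = 0 := by
    refine T_tors hp (fwdDiff_aux.fwdDiffₗ (ZMod p) M 1) shift_pow_p a ?_
    have : p = (p - (r + 1)) + (r + 1) := by omega
    rw [show (fwdDiff_aux.fwdDiffₗ (ZMod p) M 1) ^ p = (fwdDiff_aux.fwdDiffₗ (ZMod p) M 1) ^ ((p - (r + 1)) + (r + 1)) by rw [← this], pow_add, Module.End.mul_apply, iter_T_eq (r + 1), ha1, map_zero]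
  have hval : ∀ i, ∃ k, e k = a i - a 0 := by
    intro i
    apply he'
    have := const_of_diff a (nsmulAddMonoidHom (α := M) p).ker (by
      intro i
      exact congrFun hpa i) i
    exact this
  choose f0 hf0 using hval
  have haf : a = fun i => a 0 + e (f0 i) := by funext i; rw [hf0]; abel
  let S : AddSubgroup (ZMod p → ZMod p) :=
    { carrier := {f | ∃ w : M, (fun i => w + e (f i)) ∈ A}
      zero_mem' := ⟨0, by convert A.zero_mem using 1; funext i; simp⟩
      add_mem' := by
        rintro f g ⟨w, hw⟩ ⟨v, hv⟩
        refine ⟨w + v, ?_⟩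
        convert A.add_mem hw hv using 1
        funext i; simp; abel
      neg_mem' := by
        rintro f ⟨w, hw⟩
        refine ⟨-w, ?_⟩
        convert A.neg_mem hw using 1
        funext i; simp; abel }
  have hS0 : f0 ∈ S := ⟨a 0, by rw [← haf]; exact haA⟩
  have hSD : ∀ k, (fwdDiff 1)^[k] f0 ∈ S := by
    intro k
    induction k with
    | zero => exact hS0
    | succ k ih =>
      rw [Function.iterate_succ_apply']
      obtain ⟨w, hw⟩ := ih
      refine ⟨0, ?_⟩
      convert hsh _ hw using 1
      funext i; simp [fwdDiff]
  have hdiff : ∀ k, 1 ≤ k → (fwdDiff 1)^[k] a = fun i => e ((fwdDiff 1)^[k] f0 i) := by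
    intro k hk
    obtain ⟨k, rfl⟩ := Nat.exists_eq_add_of_le' hk
    rw [← comp_iter, Function.iterate_succ_apply, Function.iterate_succ_apply]
    congr 1
    funext i
    simp only [fwdDiff]
    rw [hf0, hf0]; abel
  have h1 : (fwdDiff 1)^[r+1] f0 = 0 := by
    funext i
    apply he
    rw [hdiff _ (by omega)] at ha1
    rw [congrFun ha1 i]; simp
  have hconst : ∀ k (g : ZMod p → ZMod p), (fwdDiff 1)^[k+1] g = 0 → ∀ i, (fwdDiff 1)^[k] g i = (fwdDiff 1)^[k] g 0 := by
    intro k g hg i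
    rw [Function.iterate_succ_apply'] at hg
    have := const_of_diff _ ⊥ (by intro i; rw [hg]; simp) i
    simpa [sub_eq_zero] using this
  have h2 : (fwdDiff 1)^[r] f0 0 ≠ 0 := by
    intro h0
    apply ha2
    rw [hdiff r hr1]
    funext i
    rw [hconst r f0 h1 i, h0]; simp
  have main : ∀ d, d ≤ r + 1 → ∀ f, (fwdDiff 1)^[d] f = 0 → f ∈ S := by
    intro d
    induction d with
    | zero => intro _ f hf; rw [show f = 0 from hf]; exact S.zero_mem
    | succ d ih =>
      intro hd f hf
      set c : ZMod p := (fwdDiff 1)^[d] f 0 / (fwdDiff 1)^[r] f0 0 with hcdef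
      have hmem : c.val • (fwdDiff 1)^[r - d] f0 ∈ S := S.nsmul_mem (hSD _) _
      have : f + -(c.val • (fwdDiff 1)^[r - d] f0) ∈ S := by
        apply ih (by omega)
        have e1 : -(c.val • (fwdDiff 1)^[r - d] f0) = (-c) • (fwdDiff 1)^[r - d] f0 := by
          funext i
          rw [Pi.neg_apply, Pi.smul_apply, Pi.smul_apply, nsmul_eq_mul, ZMod.natCast_zmod_val,
            smul_eq_mul, neg_mul]
        rw [e1, fwdDiff_iter_add, fwdDiff_iter_const_smul, ← Function.iterate_add_apply,
          show d + (r - d) = r by omega]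
        funext i
        simp only [Pi.add_apply, Pi.smul_apply, smul_eq_mul, Pi.zero_apply]
        rw [hconst d f hf i, hconst r f0 h1 i, hcdef]
        field_simp; ring
      have := S.add_mem this hmem
      simpa using this
  exact main (r + 1) le_rfl f hf

theorem normal_meets_center_s10 {G : Type*} [Group G] [Finite G] {p : ℕ} [Fact p.Prime]
    (hG : IsPGroup p G) (N : Subgroup G) [N.Normal] (hN : N ≠ ⊥) :
    ∃ z ∈ N, z ∈ Subgroup.center G ∧ z ≠ 1 := by
  have hG' : IsPGroup p (ConjAct G) := hG.of_equiv ConjAct.toConjAct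
  have hdvd : p ∣ Nat.card N := by
    have := (hG.to_subgroup N)
    have hnt : Nontrivial N := (Subgroup.nontrivial_iff_ne_bot N).mpr hN
    obtain ⟨k, hk, hk'⟩ := this.nontrivial_iff_card.mp hnt
    rw [hk']; exact dvd_pow_self _ hk.ne'
  obtain ⟨b, hb, hb1⟩ := hG'.exists_fixed_point_of_prime_dvd_card_of_fixed_point N hdvd
    (a := (1 : N)) (by intro g; exact smul_one g)
  refine ⟨b, b.2, ?_, fun h => hb1 (Subtype.ext h.symm)⟩
  rw [Subgroup.mem_center_iff]
  intro g
  have := congrArg Subtype.val (hb (ConjAct.toConjAct g))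
  rw [ConjAct.Subgroup.val_conj_smul, ConjAct.toConjAct_smul] at this
  rw [mul_inv_eq_iff_eq_mul] at this
  exact this

theorem exists_mod_center {G : Type*} [Group G] [Finite G] {p : ℕ} [Fact p.Prime]
    (hG : IsPGroup p G) (B C : Subgroup G) [B.Normal] [C.Normal] (hCB : ¬ C ≤ B) :
    ∃ y ∈ C, y ∉ B ∧ y ^ p ∈ B ∧ ∀ h, h * y * h⁻¹ * y⁻¹ ∈ B := by
  have hq : IsPGroup p (G ⧸ B) := hG.to_quotient B
  let D : Subgroup (G ⧸ B) := C.map (QuotientGroup.mk' B) ⊓ Subgroup.center (G ⧸ B)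
  have hnC : (C.map (QuotientGroup.mk' B)).Normal :=
    Subgroup.Normal.map inferInstance _ (QuotientGroup.mk'_surjective B)
  have hne : C.map (QuotientGroup.mk' B) ≠ ⊥ := by
    intro h
    rw [Subgroup.map_eq_bot_iff, QuotientGroup.ker_mk'] at h
    exact hCB h
  obtain ⟨z, hz1, hz2, hz3⟩ := normal_meets_center_s10 hq _ hne
  have hdvd : p ∣ Nat.card D := by
    have := (hq.to_subgroup D)
    have hnt : Nontrivial D := by
      rw [Subgroup.nontrivial_iff_ne_bot]
      intro h
      exact hz3 ((Subgroup.mem_bot).mp (h ▸ (⟨hz1, hz2⟩ : z ∈ D)))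
    obtain ⟨k, hk, hk'⟩ := this.nontrivial_iff_card.mp hnt
    rw [hk']; exact dvd_pow_self _ hk.ne'
  obtain ⟨d, hd⟩ := exists_prime_orderOf_dvd_card' p hdvd
  rw [← Subgroup.orderOf_coe] at hd
  obtain ⟨hd1, hd2⟩ := Subgroup.mem_inf.mp d.2
  obtain ⟨y, hy, hyd⟩ := Subgroup.mem_map.mp hd1
  rw [← hyd] at hd hd2
  have hdp := pow_orderOf_eq_one (QuotientGroup.mk' B y)
  rw [hd] at hdp
  refine ⟨y, hy, ?_, ?_, ?_⟩
  · intro hyB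
    have : QuotientGroup.mk' B y = 1 := (QuotientGroup.eq_one_iff y).mpr hyB
    rw [this, orderOf_one] at hd
    exact (Fact.out : p.Prime).one_lt.ne hd
  · rw [← map_pow] at hdp
    exact (QuotientGroup.eq_one_iff _).mp hdp
  · intro h
    rw [Subgroup.mem_center_iff] at hd2
    have := hd2 (QuotientGroup.mk' B h)
    apply (QuotientGroup.eq_one_iff _).mp
    change QuotientGroup.mk' B (h * y * h⁻¹ * y⁻¹) = 1
    rw [map_mul, map_mul, map_mul, this, map_inv, map_inv]
    group

section rep
variable {G : Type*} [Group G] {V : Type*} [AddCommGroup V] [Module ℂ V] [FiniteDimensional ℂ V]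

theorem schur' [Nontrivial V] (ρ : G →* V →ₗ[ℂ] V)
    (hirr : ∀ W : Submodule ℂ V, (∀ g, ∀ w ∈ W, ρ g w ∈ W) → W = ⊥ ∨ W = ⊤)
    (f : V →ₗ[ℂ] V) (hf : ∀ g v, f (ρ g v) = ρ g (f v)) : ∃ c : ℂ, f = c • LinearMap.id := by
  obtain ⟨c, hc⟩ := Module.End.exists_eigenvalue f
  refine ⟨c, ?_⟩
  have h := hirr (Module.End.eigenspace f c) (by
    intro g w hw
    rw [Module.End.mem_eigenspace_iff] at hw ⊢
    rw [hf, hw, map_smul])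
  have h2 := h.resolve_left hc
  ext v
  have : v ∈ Module.End.eigenspace f c := by rw [h2]; trivial
  rw [Module.End.mem_eigenspace_iff] at this
  simpa using this

theorem zero_of_conj (ρ : G →* V →ₗ[ℂ] V) (g h z : G) (c : ℂ) (hz : ρ z = c • LinearMap.id)
    (hc : c ≠ 1) (hg : h * g * h⁻¹ = z * g) : LinearMap.trace ℂ V (ρ g) = 0 := by
  have h1 : LinearMap.trace ℂ V (ρ (h * g * h⁻¹)) = LinearMap.trace ℂ V (ρ g) := by
    rw [map_mul, LinearMap.trace_mul_comm, ← map_mul]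
    congr 2; group
  rw [hg, map_mul, hz, smul_mul_assoc, map_smul] at h1
  have h2 : LinearMap.trace ℂ V ((LinearMap.id : V →ₗ[ℂ] V) * ρ g) = LinearMap.trace ℂ V (ρ g) := rfl
  rw [h2, smul_eq_mul] at h1
  have : (c - 1) * LinearMap.trace ℂ V (ρ g) = 0 := by rw [sub_mul, h1]; ring
  exact (mul_eq_zero.mp this).resolve_left (sub_ne_zero.mpr hc)

theorem common_eigen [Nontrivial V] (ρ : G →* V →ₗ[ℂ] V) (C : Subgroup G)
    (hC : ∀ a ∈ C, ∀ b ∈ C, a * b = b * a) :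
    ∃ v : V, v ≠ 0 ∧ ∀ a ∈ C, ∃ c : ℂ, ρ a v = c • v := by
  let P : Set (Submodule ℂ V) := {W | W ≠ ⊥ ∧ ∀ a ∈ C, ∀ w ∈ W, ρ a w ∈ W}
  have hP : P.Nonempty := ⟨⊤, top_ne_bot, fun _ _ _ _ => trivial⟩
  obtain ⟨W, ⟨hW0, hWi⟩, hmin⟩ := WellFounded.has_min (wellFounded_lt (α := Submodule ℂ V)) P hP
  obtain ⟨v, hv, hv0⟩ := Submodule.exists_mem_ne_zero_of_ne_bot hW0
  refine ⟨v, hv0, fun a ha => ?_⟩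
  have hnt : Nontrivial W := Submodule.nontrivial_iff_ne_bot.mpr hW0
  obtain ⟨c, hc⟩ := Module.End.exists_eigenvalue ((ρ a).restrict (hWi a ha))
  refine ⟨c, ?_⟩
  let E : Submodule ℂ V := W ⊓ Module.End.eigenspace (ρ a) c
  have hE : E ∈ P := by
    constructor
    · obtain ⟨w, hw⟩ := hc.exists_hasEigenvector
      intro hb
      have hw1 := congrArg Subtype.val hw.apply_eq_smul
      have : (w : V) ∈ E := ⟨w.2, Module.End.mem_eigenspace_iff.mpr hw1⟩
      rw [hb, Submodule.mem_bot] at this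
      exact hw.2 (Subtype.ext this)
    · intro b hb w hw
      refine Submodule.mem_inf.mpr ⟨hWi b hb w hw.1, ?_⟩
      have := Module.End.mem_eigenspace_iff.mp hw.2
      rw [Module.End.mem_eigenspace_iff, ← Module.End.mul_apply, ← map_mul, hC a ha b hb, map_mul,
        Module.End.mul_apply, this, map_smul]
  have hEW : E = W := by
    by_contra hne
    exact hmin E hE (lt_of_le_of_ne inf_le_left hne)
  have : v ∈ E := by rw [hEW]; exact hv
  exact Module.End.mem_eigenspace_iff.mp this.2

end rep

theorem struct {G : Type*} [Group G] [Finite G] {V : Type*} [AddCommGroup V] [Module ℂ V]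
    [FiniteDimensional ℂ V] [Nontrivial V] {p n : ℕ} (hp : p.Prime) (hn : 4 ≤ n)
    (hG : Nat.card G = p ^ n) (ρ : G →* V →ₗ[ℂ] V)
    (hirr : ∀ W : Submodule ℂ V, (∀ g, ∀ w ∈ W, ρ g w ∈ W) → W = ⊥ ∨ W = ⊤)
    (hz : {g : G | LinearMap.trace ℂ V (ρ g) = 0}.ncard = p ^ n - p ^ (n - 1) + p ^ 2 - p) :
    ∃ (C : Subgroup G) (x g z : G), C.Normal ∧ (∀ a ∈ C, ∀ b ∈ C, a * b = b * a) ∧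
      Nat.card C = p ^ (n - 1) ∧ x ∈ C ∧ g ∉ C ∧ g * x * g⁻¹ = z * x ∧
      z ∈ Subgroup.center G ∧ z ≠ 1 ∧
      (∀ a ∈ C, LinearMap.trace ℂ V (ρ a) = 0 → ∀ h, h * a * h⁻¹ * a⁻¹ ∈ Subgroup.center G) ∧
      Nat.card (Subgroup.center G) = p ∧
      (∀ z ∈ Subgroup.center G, z ≠ 1 → ∃ c : ℂ, c ≠ 1 ∧ ρ z = c • LinearMap.id) ∧
      ∀ y, ρ y = 1 → y = 1 := by
  have : Fact p.Prime := ⟨hp⟩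
  have hPG : IsPGroup p G := IsPGroup.of_card hG
  have hp2 := hp.two_le
  have hsub : ∀ H : Subgroup G, ∃ k, Nat.card H = p ^ k := fun H =>
    (IsPGroup.iff_card.mp (hPG.to_subgroup H))
  have hntG : Nontrivial G := by
    rw [← Finite.one_lt_card_iff_nontrivial, hG]
    exact Nat.one_lt_pow (by omega) hp.one_lt
  -- the subgroup acting by scalars
  let K : Subgroup G :=
    { carrier := {k | ∀ h, ρ (k * h) = ρ (h * k)}
      one_mem' := by intro h; simp
      mul_mem' := by
        intro a b ha hb h
        have e1 : ρ (a * b * h) = ρ a * ρ (b * h) := by rw [← map_mul, mul_assoc]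
        rw [e1, hb, ← map_mul, ← mul_assoc, map_mul ρ (a * h), ha, ← map_mul, mul_assoc]
      inv_mem' := by
        intro k hk h
        have e1 : ρ (k⁻¹ * h) = ρ k⁻¹ * ρ (h * k) * ρ k⁻¹ := by
          rw [← map_mul, ← map_mul]; congr 1; group
        rw [e1, ← hk h, ← map_mul, ← map_mul]; congr 1; group }
  have hKs : ∀ k ∈ K, ∃ c : ℂ, ρ k = c • LinearMap.id := by
    intro k hk
    refine schur' ρ hirr (ρ k) ?_
    intro g v
    rw [← Module.End.mul_apply, ← Module.End.mul_apply, ← map_mul, ← map_mul, hk g]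
  have hZK : Subgroup.center G ≤ K := by
    intro z hz h
    rw [Subgroup.mem_center_iff.mp hz h]
  have hKdvd : Nat.card K ∣ {g : G | LinearMap.trace ℂ V (ρ g) = 0}.ncard := by
    set S := {g : G | LinearMap.trace ℂ V (ρ g) = 0}
    have hS : S = (QuotientGroup.mk : G → G ⧸ K) ⁻¹' ((QuotientGroup.mk : G → G ⧸ K) '' S) := by
      apply Set.Subset.antisymm (Set.subset_preimage_image _ _)
      rintro g ⟨s, hs, hsg⟩
      have hk : s⁻¹ * g ∈ K := QuotientGroup.eq.mp hsg
      obtain ⟨c, hc⟩ := hKs _ hk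
      have : ρ g = ρ s * ρ (s⁻¹ * g) := by rw [← map_mul]; congr 1; group
      change LinearMap.trace ℂ V (ρ g) = 0
      rw [this, hc, mul_smul_comm, map_smul]
      have h2 : LinearMap.trace ℂ V (ρ s * LinearMap.id) = LinearMap.trace ℂ V (ρ s) := rfl
      rw [h2, show LinearMap.trace ℂ V (ρ s) = 0 from hs, smul_zero]
    have := Nat.card_congr (QuotientGroup.preimageMkEquivSubgroupProdSet K
      ((QuotientGroup.mk : G → G ⧸ K) '' S))
    rw [← hS, Nat.card_prod, Nat.card_coe_set_eq] at this
    rw [this]; exact dvd_mul_right _ _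
  obtain ⟨j, hj⟩ := hsub K
  have hj1 : j ≤ 1 := by
    by_contra hcon
    have h1 : p ^ 2 ∣ p ^ n - p ^ (n - 1) + p ^ 2 - p := by
      rw [← hz]; refine dvd_trans ?_ hKdvd
      rw [hj]; exact pow_dvd_pow _ (by omega)
    have h2 : p ^ 2 ∣ p ^ n - p ^ (n - 1) + p ^ 2 :=
      dvd_add (Nat.dvd_sub (pow_dvd_pow _ (by omega)) (pow_dvd_pow _ (by omega))) dvd_rfl
    have h3 := Nat.dvd_sub h2 h1
    have hpp : p ≤ p ^ 2 := Nat.le_self_pow (by norm_num) p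
    rw [Nat.sub_sub_self (by omega)] at h3
    have := Nat.le_of_dvd hp.pos h3
    nlinarith
  have hcZ : Nat.card (Subgroup.center G) = p ∧ Subgroup.center G = K := by
    obtain ⟨i, hi⟩ := hsub (Subgroup.center G)
    have hnt := hPG.center_nontrivial
    have h1 : 1 < Nat.card (Subgroup.center G) := Finite.one_lt_card_iff_nontrivial.mpr hnt
    have hi0 : i ≠ 0 := by rintro rfl; rw [hi] at h1; simp at h1
    have h2 : p ≤ Nat.card (Subgroup.center G) := by rw [hi]; exact Nat.le_self_pow hi0 p
    have h3 : Nat.card K ≤ p := by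
      rw [hj]; calc p ^ j ≤ p ^ 1 := Nat.pow_le_pow_right hp.pos hj1
        _ = p := pow_one p
    have h4 := Subgroup.eq_of_le_of_card_ge hZK (by omega)
    refine ⟨?_, h4⟩
    have : Nat.card (Subgroup.center G) = Nat.card K := by rw [h4]
    omega
  obtain ⟨hZcard, hZKeq⟩ := hcZ
  have hZtop : ¬ (⊤ : Subgroup G) ≤ Subgroup.center G := by
    intro h
    have : Nat.card (Subgroup.center G) = Nat.card G := by
      rw [top_le_iff.mp h]; exact Subgroup.card_top
    rw [hZcard, hG] at this
    have h2 : p ^ 1 < p ^ n := Nat.pow_lt_pow_right hp.one_lt (by omega)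
    rw [pow_one] at h2
    omega
  obtain ⟨x, -, hxZ, -, hx⟩ := exists_mod_center hPG (Subgroup.center G) ⊤ hZtop
  have hker : ∀ z ∈ Subgroup.center G, z ≠ 1 → ρ z ≠ 1 := by
    intro z hz hz1 hρ
    let L : Subgroup G := Subgroup.center G ⊓ ρ.ker
    have hL : L = Subgroup.center G := by
      apply Subgroup.eq_of_le_of_card_ge inf_le_left
      rw [hZcard]
      obtain ⟨i, hi⟩ := hsub L
      have : i ≠ 0 := by
        rintro rfl
        rw [pow_zero, Subgroup.card_eq_one] at hi
        have : z ∈ L := ⟨hz, hρ⟩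
        rw [hi] at this
        exact hz1 this
      rw [hi]; exact Nat.le_self_pow this p
    apply hxZ
    rw [hZKeq]
    intro h
    have h1 : h * x * h⁻¹ * x⁻¹ ∈ L := by rw [hL]; exact hx h
    have h2 : ρ (h * x * h⁻¹ * x⁻¹) = 1 := h1.2
    have : ρ (h * x) = ρ (h * x * h⁻¹ * x⁻¹) * ρ (x * h) := by
      rw [← map_mul]; congr 1; group
    rw [this, h2, one_mul]
  have hsc : ∀ z ∈ Subgroup.center G, z ≠ 1 → ∃ c : ℂ, c ≠ 1 ∧ ρ z = c • LinearMap.id := by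
    intro z hz hz1
    obtain ⟨c, hc⟩ := hKs z (hZK hz)
    refine ⟨c, ?_, hc⟩
    rintro rfl
    exact hker z hz hz1 (by rw [hc, one_smul]; rfl)
  have hfaith : ∀ y, ρ y = 1 → y = 1 := by
    intro y hy
    by_contra hy1
    have : y ∈ Subgroup.center G := by
      rw [hZKeq]; intro h; rw [map_mul, map_mul, hy, one_mul, mul_one]
    exact hker y this hy1 hy
  have hzero : ∀ y h z, z ∈ Subgroup.center G → z ≠ 1 → h * y * h⁻¹ = z * y →
      LinearMap.trace ℂ V (ρ y) = 0 := by
    intro y h z hz hz1 hy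
    obtain ⟨c, hc1, hc⟩ := hsc z hz hz1
    exact zero_of_conj ρ y h z c hc hc1 hy
  let C : Subgroup G := Subgroup.centralizer {x}
  have hCmem : ∀ c, c ∈ C ↔ c * x = x * c := fun c => Subgroup.mem_centralizer_singleton_iff
  have hCtop : C ≠ ⊤ := by
    intro h
    apply hxZ
    rw [Subgroup.mem_center_iff]
    intro g
    exact (hCmem g).mp (h ▸ Subgroup.mem_top g)
  let N : Subgroup G := (C ⊓ Subgroup.centralizer (C : Set G)) ⊓ Subgroup.upperCentralSeries G 2
  have hU : ∀ y, y ∈ Subgroup.upperCentralSeries G 2 ↔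
      ∀ h, h * y * h⁻¹ * y⁻¹ ∈ Subgroup.center G := by
    intro y
    rw [Subgroup.mem_upperCentralSeries_succ_iff, Subgroup.upperCentralSeries_one]
    refine forall_congr' fun h => ?_
    rw [← Subgroup.inv_mem_iff]
    simp [mul_assoc, commutatorElement_def]
  have hxC : x ∈ C := (hCmem x).mpr rfl
  have hxN : x ∈ N := by
    refine Subgroup.mem_inf.mpr ⟨Subgroup.mem_inf.mpr ⟨hxC, ?_⟩, (hU x).mpr hx⟩
    rw [Subgroup.mem_centralizer_iff]
    intro c hc
    exact (hCmem c).mp hc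
  have hZN : Subgroup.center G ≤ N := by
    intro z hz
    have hz' := Subgroup.mem_center_iff.mp hz
    refine Subgroup.mem_inf.mpr ⟨Subgroup.mem_inf.mpr ⟨?_, ?_⟩, (hU z).mpr ?_⟩
    · rw [hCmem]; exact (hz' x).symm
    · rw [Subgroup.mem_centralizer_iff]; intro c _; exact hz' c
    · intro h; rw [hz' h]; simp
  have hNcard : p ^ 2 ≤ Nat.card N := by
    obtain ⟨i, hi⟩ := hsub N
    have h2 : 2 ≤ i := by
      by_contra hlt
      have : Subgroup.center G = N := by
        apply Subgroup.eq_of_le_of_card_ge hZN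
        rw [hi, hZcard]
        calc p ^ i ≤ p ^ 1 := Nat.pow_le_pow_right hp.pos (by omega)
          _ = p := pow_one p
      exact hxZ (this ▸ hxN)
    rw [hi]; exact Nat.pow_le_pow_right hp.pos h2
  have hCcard : Nat.card C ≤ p ^ (n - 1) := by
    obtain ⟨i, hi⟩ := hsub C
    have : i < n := by
      by_contra hge
      apply hCtop
      apply Subgroup.eq_top_of_le_card
      rw [hi, hG]; exact Nat.pow_le_pow_right hp.pos (by omega)
    rw [hi]; exact Nat.pow_le_pow_right hp.pos (by omega)
  have hz1 : ∀ y, y ∉ C → LinearMap.trace ℂ V (ρ y) = 0 := by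
    intro y hy
    refine hzero y x (y * x * y⁻¹ * x⁻¹)⁻¹ (Subgroup.inv_mem _ (hx y)) ?_ ?_
    · intro h
      apply hy
      rw [hCmem]
      rw [inv_eq_one, mul_inv_eq_one, mul_inv_eq_iff_eq_mul] at h
      exact h
    · group
  have hz2 : ∀ y ∈ N, y ∉ Subgroup.center G → LinearMap.trace ℂ V (ρ y) = 0 := by
    intro y hyN hyZ
    rw [Subgroup.mem_center_iff] at hyZ
    push Not at hyZ
    obtain ⟨h, hh⟩ := hyZ
    refine hzero y h (h * y * h⁻¹ * y⁻¹) ((hU y).mp (Subgroup.mem_inf.mp hyN).2 h) ?_ ?_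
    · intro h'
      rw [mul_inv_eq_one, mul_inv_eq_iff_eq_mul] at h'
      exact hh h'
    · group
  have hsubset : (C : Set G)ᶜ ∪ ((N : Set G) \ (Subgroup.center G : Set G)) ⊆
      {g : G | LinearMap.trace ℂ V (ρ g) = 0} := by
    rintro y (hy | ⟨hy1, hy2⟩)
    · exact hz1 y hy
    · exact hz2 y hy1 hy2
  have hdisj : Disjoint (C : Set G)ᶜ ((N : Set G) \ (Subgroup.center G : Set G)) := by
    rw [Set.disjoint_left]
    rintro y hy ⟨hy1, -⟩
    exact hy (Subgroup.mem_inf.mp (Subgroup.mem_inf.mp hy1).1).1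
  have hunion := Set.ncard_union_eq hdisj
  have hc1 : (C : Set G)ᶜ.ncard = p ^ n - Nat.card C := by
    rw [Set.ncard_compl, hG]; rfl
  have hc2 : ((N : Set G) \ (Subgroup.center G : Set G)).ncard = Nat.card N - p := by
    rw [Set.ncard_sdiff (show (Subgroup.center G : Set G) ⊆ N from hZN)]
    congr 1
  have hpn : p ^ (n - 1) ≤ p ^ n := Nat.pow_le_pow_right hp.pos (by omega)
  have hpp : p ≤ p ^ 2 := Nat.le_self_pow (by norm_num) p
  have heq := Set.eq_of_subset_of_ncard_le hsubset (by omega)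
  have hCcard' : Nat.card C = p ^ (n - 1) := by
    rw [← heq] at hz
    omega
  have hin : ∀ a ∈ C, LinearMap.trace ℂ V (ρ a) = 0 → a ∈ N := by
    intro a ha hχ
    have : a ∈ {g : G | LinearMap.trace ℂ V (ρ g) = 0} := hχ
    rw [← heq] at this
    rcases this with h | h
    · exact absurd ha h
    · exact h.1
  have hidx : C.index = p := by
    have h1 := C.card_mul_index
    rw [hCcard', hG] at h1
    have : p ^ n = p ^ (n - 1) * p := by rw [← pow_succ]; congr 1; omega
    rw [this] at h1
    exact Nat.eq_of_mul_eq_mul_left (pow_pos hp.pos _) h1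
  have hCn : C.Normal := by
    apply Subgroup.normal_of_index_eq_minFac_card
    rw [hidx, hG, hp.pow_minFac (by omega)]
  let B : Subgroup G := C ⊓ Subgroup.centralizer (C : Set G)
  have hBn : B.Normal := by infer_instance
  have hCB : C ≤ B := by
    by_contra hCB
    obtain ⟨y, hyC, hyB, -, hy⟩ := exists_mod_center hPG B C hCB
    have hy' : ∀ h, y * h * y⁻¹ * h⁻¹ ∈ B := by
      intro h
      have := B.inv_mem (hy h)
      simpa [mul_assoc] using this
    have hBc : ∀ b ∈ B, ∀ c ∈ C, c * b = b * c := by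
      intro b hb c hc
      exact Subgroup.mem_centralizer_iff.mp (Subgroup.mem_inf.mp hb).2 c hc
    have hmul : ∀ c ∈ C, ∀ d, y * (c * d) * y⁻¹ * (c * d)⁻¹ =
        (y * c * y⁻¹ * c⁻¹) * (y * d * y⁻¹ * d⁻¹) := by
      intro c hc d
      have e1 : y * (c * d) * y⁻¹ * (c * d)⁻¹ =
        (y * c * y⁻¹ * c⁻¹) * (c * (y * d * y⁻¹ * d⁻¹)) * c⁻¹ := by group
      rw [e1, hBc _ (hy' d) c hc]; group
    let D : Subgroup G :=
      { carrier := {d | ∃ c ∈ C, y * c * y⁻¹ * c⁻¹ = d}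
        one_mem' := ⟨1, C.one_mem, by group⟩
        mul_mem' := by
          rintro _ _ ⟨c, hc, rfl⟩ ⟨d, hd, rfl⟩
          exact ⟨c * d, C.mul_mem hc hd, hmul c hc d⟩
        inv_mem' := by
          rintro _ ⟨c, hc, rfl⟩
          refine ⟨c⁻¹, C.inv_mem hc, ?_⟩
          have := hmul c hc c⁻¹
          rw [eq_comm, inv_eq_iff_mul_eq_one, ← this]
          group }
    have hDn : D.Normal := by
      constructor
      rintro _ ⟨c, hc, rfl⟩ h
      have hc' : h * c * h⁻¹ ∈ C := hCn.conj_mem c hc h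
      refine ⟨h * c * h⁻¹, hc', ?_⟩
      have e1 : h * (y * c * y⁻¹ * c⁻¹) * h⁻¹ = (h * y * h⁻¹ * y⁻¹) *
        (y * (h * c * h⁻¹) * y⁻¹) * (h * y * h⁻¹ * y⁻¹)⁻¹ * (h * c * h⁻¹)⁻¹ := by group
      rw [e1, ← hBc _ (hy h) _ (hCn.conj_mem _ hc' y)]
      group
    have hDne : D ≠ ⊥ := by
      intro hD
      apply hyB
      refine Subgroup.mem_inf.mpr ⟨hyC, ?_⟩
      rw [Subgroup.mem_centralizer_iff]
      intro c hc
      have : y * c * y⁻¹ * c⁻¹ ∈ D := ⟨c, hc, rfl⟩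
      rw [hD, Subgroup.mem_bot, mul_inv_eq_one, mul_inv_eq_iff_eq_mul] at this
      exact this.symm
    obtain ⟨z, ⟨c, hc, hcz⟩, hzZ, hz1'⟩ := normal_meets_center_s10 hPG D hDne
    have : LinearMap.trace ℂ V (ρ y) = 0 := by
      refine hzero y c z⁻¹ (Subgroup.inv_mem _ hzZ) (inv_ne_one.mpr hz1') ?_
      rw [← hcz]; group
    exact hyB (Subgroup.mem_inf.mp (hin y hyC this)).1
  obtain ⟨g, hg⟩ : ∃ g, g ∉ C := by
    by_contra hcon
    push Not at hcon
    exact hCtop (eq_top_iff.mpr fun g _ => hcon g)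
  refine ⟨C, x, g, g * x * g⁻¹ * x⁻¹, hCn, ?_, hCcard', hxC, hg, by group, hx g, ?_, ?_, hZcard,
    hsc, hfaith⟩
  · intro a ha b hb
    exact Subgroup.mem_centralizer_iff.mp (Subgroup.mem_inf.mp (hCB hb)).2 a ha
  · intro h
    apply hg
    rw [hCmem]
    rw [mul_inv_eq_one, mul_inv_eq_iff_eq_mul] at h
    exact h
  · intro a ha hχ
    exact (hU a).mp (Subgroup.mem_inf.mp (hin a ha hχ)).2

theorem pow_bij {p r : ℕ} [Fact p.Prime] (hr0 : r ≠ 0) (hr : Nat.Coprime (p - 1) r) :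
    Function.Bijective (fun i : ZMod p => i ^ r) := by
  rw [← Finite.injective_iff_bijective]
  intro i j hij
  simp only at hij
  by_cases hi : i = 0
  · subst hi
    rw [zero_pow hr0, eq_comm, pow_eq_zero_iff hr0] at hij
    exact hij.symm
  by_cases hj : j = 0
  · subst hj
    rw [zero_pow hr0, pow_eq_zero_iff hr0] at hij
    exact hij
  have hc : (Nat.card (ZMod p)ˣ).Coprime r := by
    rw [Nat.card_eq_fintype_card, ZMod.card_units_eq_totient, Nat.totient_prime Fact.out]; exact hr
  have : Units.mk0 i hi = Units.mk0 j hj := by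
    apply (powCoprime hc).injective
    apply Units.ext
    simpa [powCoprime] using hij
  exact congrArg Units.val this

theorem part2 {G : Type*} [Group G] [Finite G] {V : Type*} [AddCommGroup V] [Module ℂ V]
    [FiniteDimensional ℂ V] [Nontrivial V] {p n r : ℕ} (hp : p.Prime) (hr3 : 3 ≤ r)
    (hrp : r + 1 ≤ p) (hrc : Nat.Coprime (p - 1) r) (hn : r + 2 ≤ n)
    (hG : Nat.card G = p ^ n) (ρ : G →* V →ₗ[ℂ] V)
    (hirr : ∀ W : Submodule ℂ V, (∀ g, ∀ w ∈ W, ρ g w ∈ W) → W = ⊥ ∨ W = ⊤)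
    (C : Subgroup G) (x g z : G) (hCn : C.Normal) (hcomm : ∀ a ∈ C, ∀ b ∈ C, a * b = b * a)
    (hCcard : Nat.card C = p ^ (n - 1)) (hxC : x ∈ C) (hg : g ∉ C) (hgx : g * x * g⁻¹ = z * x)
    (hzZ : z ∈ Subgroup.center G) (hz1 : z ≠ 1)
    (htr : ∀ a ∈ C, LinearMap.trace ℂ V (ρ a) = 0 → ∀ h, h * a * h⁻¹ * a⁻¹ ∈ Subgroup.center G)
    (hZcard : Nat.card (Subgroup.center G) = p)
    (hsc : ∀ z ∈ Subgroup.center G, z ≠ 1 → ∃ c : ℂ, c ≠ 1 ∧ ρ z = c • LinearMap.id)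
    (hfaith : ∀ y, ρ y = 1 → y = 1) : False := by
  have : Fact p.Prime := ⟨hp⟩
  have : NeZero p := ⟨hp.ne_zero⟩
  have hidx : C.index = p := by
    have h1 := C.card_mul_index
    rw [hCcard, hG] at h1
    have : p ^ n = p ^ (n - 1) * p := by rw [← pow_succ]; congr 1; omega
    rw [this] at h1
    exact Nat.eq_of_mul_eq_mul_left (pow_pos hp.pos _) h1
  -- decomposition of elements
  have hdec : ∀ h : G, ∃ m : ℕ, ∃ c ∈ C, h = (g ^ m)⁻¹ * c := by
    intro h
    have hq : Nat.card (G ⧸ C) = p := hidx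
    have hne : (QuotientGroup.mk' C g⁻¹) ≠ 1 := by
      intro h1
      exact hg (C.inv_mem_iff.mp ((QuotientGroup.eq_one_iff _).mp h1))
    obtain ⟨m, hm⟩ := mem_powers_of_prime_card hq hne (g' := QuotientGroup.mk' C h)
    refine ⟨m, g ^ m * h, ?_, by group⟩
    apply (QuotientGroup.eq_one_iff _).mp
    change QuotientGroup.mk' C (g ^ m * h) = 1
    have hm' : (QuotientGroup.mk' C g⁻¹) ^ m = QuotientGroup.mk' C h := hm
    rw [map_mul, ← hm', map_inv, inv_pow, map_pow, mul_inv_cancel]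
  have hgp : g ^ p ∈ C := by
    have := C.pow_index_mem g
    rwa [hidx] at this
  have hzC : z ∈ C := by
    have h1 := C.mul_mem (hCn.conj_mem x hxC g) (C.inv_mem hxC)
    rw [hgx] at h1
    simpa using h1
  -- eigenvector
  obtain ⟨v, hv0, hv⟩ := common_eigen ρ C hcomm
  have hv' : ∀ a : C, ∃ c : ℂ, ρ a v = c • v := fun a => hv a a.2
  choose l0 hl0 using hv'
  let l1 : C →* ℂ :=
    { toFun := l0
      map_one' := by
        apply smul_left_injective ℂ hv0
        simp only
        rw [← hl0]; simp
      map_mul' := by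
        intro a b
        apply smul_left_injective ℂ hv0
        simp only
        rw [← hl0, Subgroup.coe_mul, map_mul, Module.End.mul_apply, hl0, map_smul, hl0, smul_smul,
          mul_comm] }
  let lam : C →* ℂˣ := l1.toHomUnits
  have hlam : ∀ a : C, ρ a v = (lam a : ℂ) • v := hl0
  let τ : MulAut C := MulAut.conjNormal g
  have hτ : ∀ (k : ℕ) (a : C), (((τ ^ k) a : C) : G) = g ^ k * a * (g ^ k)⁻¹ := by
    intro k a
    have : τ ^ k = MulAut.conjNormal (g ^ k) := by rw [map_pow]
    rw [this, MulAut.conjNormal_apply]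
  have hτ1 : ∀ a : C, ((τ a : C) : G) = g * a * g⁻¹ := fun a => MulAut.conjNormal_apply _ _
  have hτp : τ ^ p = 1 := by
    ext a
    rw [hτ, hcomm _ hgp _ a.2]; simp
  have hτs : ∀ i : ZMod p, τ ^ (i + 1).val = τ ^ i.val * τ := by
    intro i
    have : Fact (1 < p) := ⟨hp.one_lt⟩
    rw [ZMod.val_add, ZMod.val_one, ← pow_eq_pow_mod _ hτp, pow_succ]
  let U : Additive C →+ (ZMod p → Additive ℂˣ) :=
    { toFun := fun a i => Additive.ofMul (lam ((τ ^ i.val) a.toMul))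
      map_zero' := by funext i; simp
      map_add' := by intro a b; funext i; simp }
  have hU : ∀ (a : C) i, U (Additive.ofMul a) i = Additive.ofMul (lam ((τ ^ i.val) a)) :=
    fun a i => rfl
  have hUD : ∀ a : C, fwdDiff 1 (U (Additive.ofMul a)) = U (Additive.ofMul (τ a * a⁻¹)) := by
    intro a
    funext i
    change U (Additive.ofMul a) (i + 1) - U (Additive.ofMul a) i = U (Additive.ofMul (τ a * a⁻¹)) i
    rw [hU a (i + 1), hU a i, hU (τ a * a⁻¹) i]
    simp only [hτs, MulAut.mul_apply, map_mul, map_inv, ofMul_mul, ofMul_inv]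
    rw [sub_eq_add_neg]
  -- basis
  let w : ZMod p → V := fun i => ρ (g ^ i.val)⁻¹ v
  have hw : ∀ (a : C) i, ρ a (w i) = (lam ((τ ^ i.val) a) : ℂ) • w i := by
    intro a i
    have e1 : (a : G) * (g ^ i.val)⁻¹ = (g ^ i.val)⁻¹ * (((τ ^ i.val) a : C) : G) := by
      rw [hτ]; group
    change ρ a (ρ (g ^ i.val)⁻¹ v) = _ • ρ (g ^ i.val)⁻¹ v
    rw [← Module.End.mul_apply, ← map_mul, e1, map_mul, Module.End.mul_apply, hlam, map_smul]
  have hw0 : ∀ i, w i ≠ 0 := by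
    intro i h
    apply hv0
    have : ρ (g ^ i.val) (w i) = v := by
      change ρ (g ^ i.val) (ρ (g ^ i.val)⁻¹ v) = v
      rw [← Module.End.mul_apply, ← map_mul]; simp
    rw [← this, h, map_zero]
  have hspan : ⊤ ≤ Submodule.span ℂ (Set.range w) := by
    have h1 : Submodule.span ℂ (Set.range fun h => ρ h v) = ⊤ := by
      refine (hirr _ ?_).resolve_left ?_
      · intro h u hu
        have : Submodule.span ℂ (Set.range fun h => ρ h v) ≤
            (Submodule.span ℂ (Set.range fun h => ρ h v)).comap (ρ h) := by
          rw [Submodule.span_le]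
          rintro _ ⟨k, rfl⟩
          apply Submodule.subset_span
          exact ⟨h * k, by simp⟩
        exact this hu
      · intro hb
        have : v ∈ Submodule.span ℂ (Set.range fun h => ρ h v) :=
          Submodule.subset_span ⟨1, by simp⟩
        rw [hb] at this
        exact hv0 this
    rw [← h1, Submodule.span_le]
    rintro _ ⟨h, rfl⟩
    obtain ⟨m, c, hc, rfl⟩ := hdec h
    have hmem : ((g ^ p) ^ (m / p))⁻¹ * c ∈ C := C.mul_mem (C.inv_mem (C.pow_mem hgp _)) hc
    have e1 : (g ^ m)⁻¹ * c = (g ^ ((m : ZMod p)).val)⁻¹ * (((g ^ p) ^ (m / p))⁻¹ * c) := by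
      rw [ZMod.val_natCast, ← mul_assoc, ← mul_inv_rev, ← pow_mul, ← pow_add, Nat.div_add_mod]
    have e2 := hlam ⟨_, hmem⟩
    simp only at e2
    simp only [SetLike.mem_coe]
    rw [e1, map_mul, Module.End.mul_apply, e2, map_smul]
    exact Submodule.smul_mem _ _ (Submodule.subset_span ⟨_, rfl⟩)
  -- the root of unity
  let z' : C := ⟨z, hzC⟩
  let ζ : ℂˣ := lam z'
  have hζ1 : ζ ≠ 1 := by
    intro h
    obtain ⟨c, hc1, hc⟩ := hsc z hzZ hz1
    have h1 := hlam z'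
    change ρ z v = (ζ : ℂ) • v at h1
    rw [hc, h] at h1
    apply hc1
    apply smul_left_injective ℂ hv0
    simpa using h1
  have hcp : ∀ y ∈ Subgroup.center G, y ^ p = 1 := by
    intro y hy
    have : (⟨y, hy⟩ : Subgroup.center G) ^ p = 1 := by rw [← hZcard]; exact pow_card_eq_one'
    simpa using congrArg Subtype.val this
  have hζp : ζ ^ p = 1 := by
    have : z' ^ p = 1 := Subtype.ext (hcp z hzZ)
    change lam z' ^ p = 1
    rw [← map_pow, this, map_one]
  have hord : orderOf ζ = p := orderOf_eq_prime hζp hζ1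
  have hτx : ∀ k : ℕ, (τ ^ k) ⟨x, hxC⟩ = z' ^ k * ⟨x, hxC⟩ := by
    intro k
    induction k with
    | zero => simp
    | succ k ih =>
      have e1 : τ z' = z' := by
        apply Subtype.ext
        rw [hτ1]
        change g * z * g⁻¹ = z
        rw [Subgroup.mem_center_iff.mp hzZ g]; group
      have e2 : τ ⟨x, hxC⟩ = z' * ⟨x, hxC⟩ := by
        apply Subtype.ext
        rw [hτ1]; exact hgx
      rw [pow_succ', MulAut.mul_apply, ih, map_mul, map_pow, e1, e2, ← mul_assoc, ← pow_succ]
  have hli : LinearIndependent ℂ w := by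
    refine Module.End.eigenvectors_linearIndependent' (ρ x)
      (fun i : ZMod p => ((lam ((τ ^ i.val) ⟨x, hxC⟩) : ℂˣ) : ℂ)) ?_ w ?_
    · intro i j hij
      have h1 := Units.ext hij
      rw [hτx, hτx, map_mul, map_mul, map_pow, map_pow] at h1
      have h2 := mul_right_cancel h1
      apply ZMod.val_injective
      refine pow_injOn_Iio_orderOf (x := ζ) ?_ ?_ h2
      · rw [hord]; exact ZMod.val_lt i
      · rw [hord]; exact ZMod.val_lt j
    · intro i
      exact ⟨Module.End.mem_eigenspace_iff.mpr (hw ⟨x, hxC⟩ i), hw0 i⟩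
  let b := Module.Basis.mk hli hspan
  have hb : ∀ i, b i = w i := fun i => Module.Basis.mk_apply hli hspan i
  have htrace : ∀ a : C, LinearMap.trace ℂ V (ρ a) = ∑ i : ZMod p, (lam ((τ ^ i.val) a) : ℂ) := by
    intro a
    rw [LinearMap.trace_eq_matrix_trace ℂ b, Matrix.trace]
    refine Finset.sum_congr rfl fun i _ => ?_
    rw [Matrix.diag_apply, LinearMap.toMatrix_apply, hb, hw, ← hb]
    simp
  have hUinj : ∀ a : C, U (Additive.ofMul a) = 0 → a = 1 := by
    intro a ha
    apply Subtype.ext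
    apply hfaith
    refine b.ext fun i => ?_
    have : lam ((τ ^ i.val) a) = 1 := congrFun ha i
    rw [hb, hw, this]; simp
  have hUinj' : Function.Injective U := by
    rw [injective_iff_map_eq_zero]
    intro a ha
    exact hUinj a.toMul ha
  -- the map e
  let e : ZMod p →+ Additive ℂˣ := ZMod.lift p
    ⟨zmultiplesHom (Additive ℂˣ) (Additive.ofMul ζ), by
      simp only [zmultiplesHom_apply, natCast_zsmul, ← ofMul_pow, hζp, ofMul_one]⟩
  have heN : ∀ k : ℕ, e (k : ZMod p) = Additive.ofMul (ζ ^ k) := by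
    intro k
    have := ZMod.lift_coe p ⟨zmultiplesHom (Additive ℂˣ) (Additive.ofMul ζ), by
      simp only [zmultiplesHom_apply, natCast_zsmul, ← ofMul_pow, hζp, ofMul_one]⟩ (k : ℤ)
    simp only [Int.cast_natCast] at this
    change e (k : ZMod p) = _ at this
    rw [this]; simp
  have heinj : Function.Injective e := by
    rw [injective_iff_map_eq_zero]
    intro k hk
    rw [← ZMod.natCast_zmod_val k, heN] at hk
    have h1 : ζ ^ k.val = 1 := hk
    have h2 := orderOf_dvd_of_pow_eq_one h1
    rw [hord] at h2
    rw [← ZMod.natCast_zmod_val k]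
    exact (ZMod.natCast_eq_zero_iff _ _).mpr h2
  have hprim : IsPrimitiveRoot (ζ : ℂ) p := by
    have := IsPrimitiveRoot.orderOf ζ
    rw [hord] at this
    exact IsPrimitiveRoot.coe_units_iff.mpr this
  have hesurj : ∀ m : Additive ℂˣ, p • m = 0 → ∃ k, e k = m := by
    intro m hm
    have h1 : m.toMul ^ p = 1 := hm
    have h2 : ((m.toMul : ℂˣ) : ℂ) ^ p = 1 := by
      rw [← Units.val_pow_eq_pow_val, h1, Units.val_one]
    obtain ⟨k, -, hk⟩ := hprim.eq_pow_of_pow_eq_one h2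
    refine ⟨k, ?_⟩
    rw [heN]
    have : ζ ^ k = m.toMul := Units.ext (by rw [Units.val_pow_eq_pow_val, hk])
    rw [this]; rfl
  -- fixed elements are central
  have hcent : ∀ a : C, τ a = a → (a : G) ∈ Subgroup.center G := by
    intro a ha
    have h1 := congrArg Subtype.val ha
    rw [hτ1, mul_inv_eq_iff_eq_mul] at h1
    have hga : Commute g a := h1
    rw [Subgroup.mem_center_iff]
    intro h
    obtain ⟨m, c, hc, rfl⟩ := hdec h
    have h2 : Commute (g ^ m)⁻¹ (a : G) := (hga.pow_left m).inv_left
    exact (h2.mul_left (hcomm c hc a a.2)).eq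
  obtain ⟨ω, ⟨a', ha'⟩⟩ := key_L (N := n) hp (by omega : 1 ≤ r) hrp e heinj hesurj U.range
    (by
      have : Finite (Additive C) := inferInstanceAs (Finite C)
      exact Finite.of_surjective U.rangeRestrict U.rangeRestrict_surjective)
    (by
      rintro _ ⟨a, rfl⟩
      exact ⟨_, (hUD a.toMul).symm⟩)
    (by
      rintro _ ⟨a, rfl⟩
      rw [← map_nsmul]
      have : p ^ n • a = 0 := by
        have h1 : a.toMul ^ p ^ n = 1 := by
          apply Subtype.ext
          rw [Subgroup.coe_pow, ← hG]; exact pow_card_eq_one'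
        exact h1
      rw [this, map_zero])
    (by
      rintro _ ⟨a, rfl⟩ h
      have h1 : U (Additive.ofMul (τ a.toMul * a.toMul⁻¹)) = 0 := by rw [← hUD]; exact h
      have h2 := hUinj _ h1
      rw [mul_inv_eq_one] at h2
      have h3 := hcp _ (hcent _ h2)
      have h4 : a.toMul ^ p = 1 := Subtype.ext h3
      have h5 : p • a = 0 := h4
      rw [← map_nsmul, h5, map_zero])
    (by
      rw [← Nat.card_congr (AddMonoidHom.ofInjective hUinj').toEquiv]
      change p ^ r < Nat.card C
      rw [hCcard]
      exact Nat.pow_lt_pow_right hp.one_lt (by omega))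
    (fun i => i ^ r) (fwdDiff_iter_pow_eq_zero_of_lt (by omega))
  let a : C := a'.toMul
  have ha : U (Additive.ofMul a) = fun i => ω + e (i ^ r) := ha'
  have hla : ∀ i : ZMod p, (lam ((τ ^ i.val) a) : ℂ) = (ω.toMul : ℂ) * ((e (i ^ r)).toMul : ℂ) := by
    intro i
    have h1 : Additive.ofMul (lam ((τ ^ i.val) a)) = ω + e (i ^ r) := congrFun ha i
    have h2 : lam ((τ ^ i.val) a) = ω.toMul * (e (i ^ r)).toMul := h1
    rw [h2, Units.val_mul]
  have htr0 : LinearMap.trace ℂ V (ρ a) = 0 := by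
    rw [htrace]
    simp only [hla]
    rw [← Finset.mul_sum]
    have h1 := (pow_bij (by omega) hrc).sum_comp (fun k : ZMod p => ((e k).toMul : ℂ))
    rw [h1]
    have h2 : (ζ : ℂ) * ∑ k : ZMod p, ((e k).toMul : ℂ) = ∑ k : ZMod p, ((e k).toMul : ℂ) := by
      rw [Finset.mul_sum]
      refine Fintype.sum_equiv (Equiv.addLeft (1 : ZMod p)) _ _ fun k => ?_
      have he1 : e 1 = Additive.ofMul ζ := by simpa using heN 1
      simp [he1]
    have h3 : ((ζ : ℂ) - 1) * ∑ k : ZMod p, ((e k).toMul : ℂ) = 0 := by rw [sub_mul, h2]; ring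
    have h4 : (ζ : ℂ) - 1 ≠ 0 := by
      rw [sub_ne_zero]; intro h; exact hζ1 (Units.ext h)
    rw [(mul_eq_zero.mp h3).resolve_left h4, mul_zero]
  have hcen := htr a a.2 htr0 g
  have hfix : τ (τ a * a⁻¹) * (τ a * a⁻¹)⁻¹ = 1 := by
    rw [mul_inv_eq_one]
    apply Subtype.ext
    rw [hτ1, mul_inv_eq_iff_eq_mul]
    have : ((τ a * a⁻¹ : C) : G) = g * a * g⁻¹ * (a : G)⁻¹ := by
      rw [Subgroup.coe_mul, hτ1]; rfl
    rw [this]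
    exact Subgroup.mem_center_iff.mp hcen g
  have hD2 : fwdDiff 1 (fwdDiff 1 (U (Additive.ofMul a))) = 0 := by
    rw [hUD, hUD, hfix]; exact map_zero U
  have hD2' : (fwdDiff 1)^[2] (fun i : ZMod p => e (i ^ r)) = 0 := by
    rw [ha] at hD2
    rw [← hD2]
    change fwdDiff 1 (fwdDiff 1 _) = _
    congr 1
    funext i
    simp [fwdDiff]
  rw [comp_iter e (fun i => i ^ r) 2] at hD2'
  have hD3 : (fwdDiff 1)^[2] (fun i : ZMod p => i ^ r) = 0 := by
    funext i
    apply heinj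
    rw [congrFun hD2' i]; simp
  have hD4 : (fwdDiff 1)^[r] (fun i : ZMod p => i ^ r) = 0 := by
    have : r = (r - 2) + 2 := by omega
    have e1 : (fwdDiff 1)^[r] (fun i : ZMod p => i ^ r) =
        (fwdDiff 1)^[(r - 2) + 2] (fun i : ZMod p => i ^ r) := by rw [← this]
    rw [e1, Function.iterate_add_apply, hD3, ← iter_T_eq, map_zero]
  rw [fwdDiff_iter_eq_factorial] at hD4
  have h0 := congrFun hD4 0
  have h1 : ((r.factorial : ℕ) : ZMod p) = 0 := by simpa using h0
  rw [ZMod.natCast_eq_zero_iff, hp.dvd_factorial] at h1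
  omega

/-- Let `p > 3` be a prime and `G` a `p`-group of order `p^n` having a
non-linear irreducible complex character vanishing at exactly `p^n - p^(n-1) + p^2 - p`
elements. Then `|G| ≤ p^(r+1)`, where `r` is the smallest prime not dividing `p - 1`. -/
theorem stmt10 {G : Type} [Group G] [Fintype G] {p n r : ℕ} (hp : p.Prime) (hp3 : 3 < p)
    (hG : Fintype.card G = p ^ n)
    (hr : r.Prime ∧ ¬ r ∣ p - 1 ∧ ∀ q : ℕ, q.Prime → ¬ q ∣ p - 1 → r ≤ q)
    (V : FDRep ℂ G) (hV : Simple V)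
    (hnl : 1 < Module.finrank ℂ V)
    (hz : {g : G | V.character g = 0}.ncard = p ^ n - p ^ (n - 1) + p ^ 2 - p) :
    Fintype.card G ≤ p ^ (r + 1) := by
  obtain ⟨hrp, hrd, hrmin⟩ := hr
  rw [hG]
  apply Nat.pow_le_pow_right hp.pos
  by_contra hcon
  have hr3 : 3 ≤ r := by
    have h2 := hrp.two_le
    rcases Nat.lt_or_ge r 3 with h | h
    · have : r = 2 := by omega
      subst this
      have := hp.eq_two_or_odd
      exact absurd (show 2 ∣ p - 1 by omega) hrd
    · exact h
  have hrle : r ≤ p - 2 := by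
    have h1 : (p - 2).minFac.Prime := Nat.minFac_prime (by omega)
    refine le_trans (hrmin _ h1 ?_) (Nat.minFac_le (by omega))
    intro h2
    have h3 := Nat.dvd_sub h2 (Nat.minFac_dvd (p - 2))
    rw [show p - 1 - (p - 2) = 1 by omega] at h3
    exact h1.one_lt.ne' (Nat.dvd_one.mp h3)
  have hnt : Nontrivial V := Module.nontrivial_of_finrank_pos (R := ℂ) (by omega)
  have hG' : Nat.card G = p ^ n := by rw [Nat.card_eq_fintype_card, hG]
  have hirr := simple_inv V hV
  obtain ⟨C, x, g, z, h1, h2, h3, h4, h5, h6, h7, h8, h9, h10, h11, h12⟩ :=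
    struct hp (by omega : 4 ≤ n) hG' V.ρ hirr hz
  exact part2 hp hr3 (by omega) ((Nat.Prime.coprime_iff_not_dvd hrp).mpr hrd).symm (by omega)
    hG' V.ρ hirr C x g z h1 h2 h3 h4 h5 h6 h7 h8 h9 h10 h11 h12
end

section
/- Let p be a prime and let G be a non-abelian finite p-group of order p^n whose center Z(G) has order p, and suppose G has an abelian subgroup U of index p. Then for every g ∈ G − U the centralizer C_G(g) has order p^2, and consequently the conjugacy class of g has exactly p^(n−2) elements. -/
theorem stmt17_aux {G : Type*} [Group G] {p : ℕ} (hp : p.Prime)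
    (U : Subgroup G) (hUi : U.index = p) (H : Subgroup G) (hH : U ≤ H) (g : G) (hg : g ∈ H)
    (hgU : g ∉ U) : H = ⊤ := by
  have h := Subgroup.relIndex_mul_index hH
  rw [hUi] at h
  rcases (Nat.dvd_prime hp).1 (Dvd.intro _ h) with h1 | h1
  · exact absurd (Subgroup.relIndex_eq_one.1 h1 hg) hgU
  · rw [h1] at h
    have : H.index = 1 := by
      have := hp.pos
      exact Nat.eq_of_mul_eq_mul_left this (by simpa using h)
    exact Subgroup.index_eq_one.1 this

/-- Let `G` be a non-abelian `p`-group of order `p^n` with `|Z(G)| = p`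
and an abelian subgroup `U` of index `p`. Then for every `g ∈ G - U` the centralizer
`C_G(g)` has order `p^2`, and the conjugacy class of `g` has exactly `p^(n-2)` elements. -/
theorem stmt17 {G : Type*} [Group G] [Fintype G] {p n : ℕ} (hp : p.Prime)
    (hG : Fintype.card G = p ^ n)
    (hna : ¬ ∀ x y : G, x * y = y * x)
    (hZ : Nat.card (Subgroup.center G) = p)
    (U : Subgroup G) (hUi : U.index = p)
    (hUab : ∀ x ∈ U, ∀ y ∈ U, x * y = y * x) :
    ∀ g : G, g ∉ U →
      Nat.card (Subgroup.centralizer {g} : Subgroup G) = p ^ 2 ∧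
        {x : G | IsConj g x}.ncard = p ^ (n - 2) := by
  intro g hg
  have key : ∀ x ∈ U, ∀ y, y ∉ U → x * y = y * x → ∀ w, x * w = w * x := by
    intro x hx y hy hxy w
    have := stmt17_aux hp U hUi (Subgroup.centralizer {x})
      (fun u hu => Subgroup.mem_centralizer_singleton_iff.2 (hUab u hu x hx)) y
      (Subgroup.mem_centralizer_singleton_iff.2 hxy.symm) hy
    have hw : w ∈ Subgroup.centralizer {x} := this ▸ Subgroup.mem_top w
    exact (Subgroup.mem_centralizer_singleton_iff.1 hw).symm
  have hZU : Subgroup.center G ≤ U := by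
    intro z hz
    by_contra hzU
    apply hna
    intro x y
    have hU : ∀ x ∈ U, ∀ w, x * w = w * x := fun x hx =>
      key x hx z hzU (Subgroup.mem_center_iff.1 hz x)
    by_cases hx : x ∈ U
    · exact hU x hx y
    have := stmt17_aux hp U hUi (Subgroup.centralizer {x})
      (fun u hu => Subgroup.mem_centralizer_singleton_iff.2 (hU u hu x)) x
      (Subgroup.mem_centralizer_singleton_iff.2 rfl) hx
    have hw : y ∈ Subgroup.centralizer {x} := this ▸ Subgroup.mem_top y
    exact (Subgroup.mem_centralizer_singleton_iff.1 hw).symm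
  set C := Subgroup.centralizer {g} with hC
  have hinf : U ⊓ C = Subgroup.center G := by
    apply le_antisymm
    · rintro x ⟨hx, hxC⟩
      refine Subgroup.mem_center_iff.2 fun w => ?_
      exact (key x hx g hg (Subgroup.mem_centralizer_singleton_iff.1 hxC) w).symm
    · exact le_inf hZU (Subgroup.center_le_centralizer _)
  have hgC : g ∈ C := Subgroup.mem_centralizer_singleton_iff.2 rfl
  have hmul : p * U.relIndex C = Nat.card C := by
    have h := Subgroup.relIndex_mul_relIndex ⊥ (U ⊓ C) C bot_le inf_le_right
    rw [Subgroup.relIndex_bot_left, Subgroup.relIndex_bot_left, Subgroup.inf_relIndex_right,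
      hinf, hZ] at h
    exact h
  have hcG : Nat.card G = p ^ n := by rw [Nat.card_eq_fintype_card, hG]
  have hdvd : U.relIndex C ∣ p ^ n := by
    rw [← hcG]
    exact (Dvd.intro_left _ hmul).trans (Subgroup.card_subgroup_dvd_card C)
  have hle : U.relIndex C ≤ p := by
    have h1 : U.relIndex ⊤ = p := by rw [Subgroup.relIndex_top_right, hUi]
    have h2 := Subgroup.relIndex_le_of_le_right (H := U) (le_top : C ≤ ⊤)
      (by rw [h1]; exact hp.ne_zero)
    rwa [h1] at h2
  have hrel : U.relIndex C = p := by
    obtain ⟨k, -, hk⟩ := (Nat.dvd_prime_pow hp).1 hdvd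
    rw [hk] at hle ⊢
    have h1 : k ≤ 1 := by
      have : p ^ k ≤ p ^ 1 := by simpa using hle
      exact (Nat.pow_le_pow_iff_right hp.one_lt).1 this
    have h0 : k ≠ 0 := by
      rintro rfl
      exact hg (Subgroup.relIndex_eq_one.1 (by simpa using hk) hgC)
    have : k = 1 := by omega
    simp [this]
  have hcard : Nat.card C = p ^ 2 := by rw [← hmul, hrel, sq]
  refine ⟨hcard, ?_⟩
  have hidx : {x : G | IsConj g x}.ncard = C.index := by
    have h1 := MulAction.index_stabilizer (ConjAct G) g
    have h2 : MulAction.orbit (ConjAct G) g = {x : G | IsConj g x} := by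
      ext x
      rw [ConjAct.mem_orbit_conjAct, isConj_comm]; rfl
    rw [h2, ConjAct.stabilizer_eq_centralizer] at h1
    rw [← h1]
    rfl
  rw [hidx]
  have h := Subgroup.card_mul_index C
  rw [hcard, hcG] at h
  have hn : 2 ≤ n := (Nat.pow_dvd_pow_iff_le_right hp.one_lt).1 (Dvd.intro _ h)
  apply Nat.eq_of_mul_eq_mul_left (pow_pos hp.pos 2)
  rw [h, ← pow_add]
  congr 1
  omega
end
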